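/- arXiv:quant-ph/0309186 — 2 statements merged into one kernel-verified Lean document; each statement's English description precedes it below -/
import Mathlib

section
/- Let λ_i^{(a)} (i,a ∈ {1,2,3}) be nine nonnegative real numbers satisfying λ_1^{(a)} ≤ λ_2^{(a)} ≤ λ_3^{(a)} and λ_1^{(a)} + λ_2^{(a)} + λ_3^{(a)} = 1 for each a. Then there exists a pure three-qutrit state whose three one-particle reduced density matrices have (increasingly ordered) eigenvalues λ_1^{(a)} ≤ λ_2^{(a)} ≤ λ_3^{(a)} for a = 1,2,3 if and only if for every permutation (a,b,c) of (1,2,3) the following seven inequalities hold: (1) λ_2^{(a)}+λ_1^{(a)} ≤ λ_2^{(b)}+λ_1^{(b)}+λ_2^{(c)}+λ_1^{(c)}; (2) λ_3^{(a)}+λ_1^{(a)} ≤ λ_2^{(b)}+λ_1^{(b)}+λ_3^{(c)}+λ_1^{(c)}; (3) λ_2^{(a)}+λ_3^{(a)} ≤ λ_2^{(b)}+λ_1^{(b)}+λ_2^{(c)}+λ_3^{(c)}; (4) 2λ_2^{(a)}+λ_1^{(a)} ≤ 2λ_2^{(b)}+λ_1^{(b)}+2λ_2^{(c)}+λ_1^{(c)};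 (5) 2λ_1^{(a)}+λ_2^{(a)} ≤ 2λ_2^{(b)}+λ_1^{(b)}+2λ_1^{(c)}+λ_2^{(c)}; (6) 2λ_2^{(a)}+λ_3^{(a)} ≤ 2λ_2^{(b)}+λ_1^{(b)}+2λ_2^{(c)}+λ_3^{(c)}; (7) 2λ_2^{(a)}+λ_3^{(a)} ≤ 2λ_1^{(b)}+λ_2^{(b)}+2λ_3^{(c)}+λ_2^{(c)}. -/
open scoped BigOperators

/-- The one-particle reduced density matrix of the first qutrit. -/
noncomputable def rho1 (c : Fin 3 → Fin 3 → Fin 3 → ℂ) : Matrix (Fin 3) (Fin 3) ℂ :=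
  Matrix.of fun i i' => ∑ j : Fin 3, ∑ k : Fin 3, c i j k * (starRingEnd ℂ) (c i' j k)

/-- The one-particle reduced density matrix of the second qutrit. -/
noncomputable def rho2 (c : Fin 3 → Fin 3 → Fin 3 → ℂ) : Matrix (Fin 3) (Fin 3) ℂ :=
  Matrix.of fun j j' => ∑ i : Fin 3, ∑ k : Fin 3, c i j k * (starRingEnd ℂ) (c i j' k)

/-- The one-particle reduced density matrix of the third qutrit. -/
noncomputable def rho3 (c : Fin 3 → Fin 3 → Fin 3 → ℂ) : Matrix (Fin 3) (Fin 3) ℂ :=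
  Matrix.of fun k k' => ∑ i : Fin 3, ∑ j : Fin 3, c i j k * (starRingEnd ℂ) (c i j k')

/-- `l` lists the eigenvalues of the Hermitian matrix `M` in increasing order. -/
def IsOrderedSpectrum (M : Matrix (Fin 3) (Fin 3) ℂ) (l : Fin 3 → ℝ) : Prop :=
  Monotone l ∧ ∃ hM : M.IsHermitian, ∃ σ : Equiv.Perm (Fin 3),
    ∀ i, l i = hM.eigenvalues (σ i)

/-!
*Necessity.* Local unitaries make the reduced density matrices diagonal. Expanding the state in
orthonormal bases of the three qutrits which are adapted to it, so that certain coefficients vanish,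
bounds the expectation of a sum of local observables; the variational principle turns each such
bound into one of the inequalities.

*Sufficiency.* The cone cut out by the inequalities is generated, up to permutations of the parties,
by eleven integral weights. Each of them is the weight of a continuous semi-invariant of the Borel
subgroup (the triples of upper triangular matrices) that does not vanish at one fixed tensor `psi`.
Hence the corresponding real character is bounded on the Borel orbit of `psi` by a power of the
norm, and such bounds persist under conic combinations of weights. For every weight of the cone the
norm, divided by the character, therefore attains a positive minimum on the closure of the orbit,
and by the Kempf–Ness argument the first-order conditions there say that the reduced density
matrices are diagonal with the prescribed eigenvalues.
-/

namespace ThreeQutrit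

open Matrix
open scoped Kronecker

/-! ### Tensors and local operators -/

/-- Coefficient arrays of (not necessarily normalized) three-qutrit states. -/
abbrev Tensor := Fin 3 → Fin 3 → Fin 3 → ℂ

/-- The squared Hilbert space norm, in contrast to the supremum norm carried by `Tensor`. -/
noncomputable def normSq (c : Tensor) : ℝ := ∑ i, ∑ j, ∑ k, ‖c i j k‖ ^ 2

/-- The tuple of one-particle reduced density matrices. -/
noncomputable def reduced (c : Tensor) : Fin 3 → Matrix (Fin 3) (Fin 3) ℂ :=
  ![rho1 c, rho2 c, rho3 c]

/-- The local operator `M 0 ⊗ M 1 ⊗ M 2` applied to a tensor. -/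
noncomputable def act (M : Fin 3 → Matrix (Fin 3) (Fin 3) ℂ) (c : Tensor) : Tensor := fun i j k =>
  ∑ p, ∑ q, ∑ r, M 0 i p * M 1 j q * M 2 k r * c p q r

/-- A property of tensors saying that the reduced density matrices are diagonal, with diagonals
listed by `l`. -/
def HasDiagonalMarginals (c : Tensor) (l : Fin 3 → Fin 3 → ℝ) : Prop :=
  ∀ a, reduced c a = diagonal fun i => (l a i : ℂ)

/-- A tensor as a matrix from the last two factors to the first one. -/
def flatten (c : Tensor) : Matrix (Fin 3) (Fin 3 × Fin 3) ℂ := .of fun i p => c i p.1 p.2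

/-- Exchange of the parties `s` and `s + 1`. -/
def adjSwap (s : Fin 2) (c : Tensor) : Tensor := ![fun i j k => c j i k, fun i j k => c i k j] s

lemma flatten_injective : Function.Injective flatten := fun _ _ h => by
  ext i j k; exact congr_fun₂ h i (j, k)

lemma flatten_act (M : Fin 3 → Matrix (Fin 3) (Fin 3) ℂ) (c : Tensor) :
    flatten (act M c) = M 0 * flatten c * (M 1 ⊗ₖ M 2)ᵀ := by
  ext i ⟨j, k⟩
  simp only [flatten, act, of_apply, mul_apply, Fintype.sum_prod_type, transpose_apply,
    kroneckerMap_apply, Finset.sum_mul]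
  rw [Finset.sum_comm]
  refine Finset.sum_congr rfl fun j' _ => ?_
  rw [Finset.sum_comm]
  exact Finset.sum_congr rfl fun k' _ => Finset.sum_congr rfl fun i' _ => by ring

lemma act_mul (M N : Fin 3 → Matrix (Fin 3) (Fin 3) ℂ) (c : Tensor) :
    act (M * N) c = act M (act N c) := flatten_injective <| by
  simp only [flatten_act, Pi.mul_apply, mul_kronecker_mul, transpose_mul, Matrix.mul_assoc]

@[simp] lemma act_one (c : Tensor) : act 1 c = c := flatten_injective <| by
  simp [flatten_act]

lemma act_smul (M : Fin 3 → Matrix (Fin 3) (Fin 3) ℂ) (z : ℂ) (c : Tensor) :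
    act M (z • c) = z • act M c := by
  ext i j k
  simp only [act, Pi.smul_apply, smul_eq_mul, Finset.mul_sum]
  simp only [mul_left_comm z]

lemma continuous_act (M : Fin 3 → Matrix (Fin 3) (Fin 3) ℂ) : Continuous (act M) := by
  unfold act; fun_prop

lemma adjSwap_act (s : Fin 2) (M : Fin 3 → Matrix (Fin 3) (Fin 3) ℂ) (c : Tensor) :
    adjSwap s (act M c) = act (M ∘ Equiv.swap s.castSucc s.succ) (adjSwap s c) := by
  ext i j k
  fin_cases s
  · change act M c j i k = ∑ _ : Fin 3, _
    rw [act, Finset.sum_comm]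
    refine Finset.sum_congr rfl fun i' _ => Finset.sum_congr rfl fun j' _ =>
      Finset.sum_congr rfl fun k' _ => ?_
    change _ = M 1 i i' * M 0 j j' * M 2 k k' * c j' i' k'
    ring
  · change act M c i k j = ∑ _ : Fin 3, _
    refine Finset.sum_congr rfl fun i' _ => ?_
    rw [Finset.sum_comm]
    refine Finset.sum_congr rfl fun j' _ => Finset.sum_congr rfl fun k' _ => ?_
    change _ = M 0 i i' * M 2 j j' * M 1 k k' * c i' k' j'
    ring

lemma reduced_adjSwap (s : Fin 2) (c : Tensor) :
    reduced (adjSwap s c) = reduced c ∘ Equiv.swap s.castSucc s.succ := by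
  funext a
  fin_cases s <;> fin_cases a
  · rfl
  · rfl
  · change rho3 (adjSwap 0 c) = rho3 c
    ext
    simp only [rho3, of_apply, adjSwap]
    exact Finset.sum_comm
  · change rho1 (adjSwap 1 c) = rho1 c
    ext
    simp only [rho1, of_apply, adjSwap]
    exact Finset.sum_comm
  · rfl
  · rfl

lemma normSq_adjSwap (s : Fin 2) (c : Tensor) : normSq (adjSwap s c) = normSq c := by
  fin_cases s
  · exact Finset.sum_comm
  · exact Finset.sum_congr rfl fun i _ => Finset.sum_comm

lemma reduced_zero_eq_mul (c : Tensor) : reduced c 0 = flatten c * (flatten c)ᴴ := by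
  ext i i'
  simp [reduced, rho1, flatten, mul_apply, Fintype.sum_prod_type]

lemma comp_perm_of_comp_swap {n : ℕ} {α : Type*} {P : (Fin (n + 1) → α) → Prop}
    (hP : ∀ (s : Fin n) f, P f → P (f ∘ Equiv.swap s.castSucc s.succ)) {f : Fin (n + 1) → α}
    (hf : P f) (σ : Equiv.Perm (Fin (n + 1))) : P (f ∘ σ) := by
  have hσ : σ ∈ Submonoid.closure (Set.range fun s : Fin n => Equiv.swap s.castSucc s.succ) :=
    Equiv.Perm.mclosure_swap_castSucc_succ n ▸ Submonoid.mem_top σ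
  induction hσ using Submonoid.closure_induction generalizing f with
  | mem _ h => obtain ⟨s, rfl⟩ := h; exact hP s f hf
  | one => exact hf
  | mul _ _ _ _ hσ hτ => exact hτ (hσ hf)

lemma comp_mulSingle_swap (a s t : Fin 3) (A : Matrix (Fin 3) (Fin 3) ℂ) :
    Pi.mulSingle a A ∘ Equiv.swap s t = Pi.mulSingle (Equiv.swap s t a) A := by
  funext b
  simp only [Function.comp_apply, Pi.mulSingle_apply, Equiv.swap_apply_eq_iff]

lemma forall_party {P : Fin 3 → Tensor → Prop} (hP : ∀ c, P 0 c)
    (hswap : ∀ (s : Fin 2) a c, P (Equiv.swap s.castSucc s.succ a) (adjSwap s c) → P a c)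
    (a : Fin 3) (c : Tensor) : P a c := by
  have h1 (c : Tensor) : P 1 c := hswap 0 1 c (hP _)
  fin_cases a
  · exact hP c
  · exact h1 c
  · exact hswap 1 2 c (h1 _)

lemma reduced_act_mulSingle (A : Matrix (Fin 3) (Fin 3) ℂ) (a : Fin 3) (c : Tensor) :
    reduced (act (Pi.mulSingle a A) c) a = A * reduced c a * Aᴴ := by
  induction a, c using forall_party with
  | hP c => simp [reduced_zero_eq_mul, flatten_act, conjTranspose_mul, Matrix.mul_assoc]
  | hswap s a c h =>
    simpa [← comp_mulSingle_swap, ← adjSwap_act, reduced_adjSwap] using h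

lemma isHermitian_reduced (a : Fin 3) (c : Tensor) : (reduced c a).IsHermitian := by
  induction a, c using forall_party with
  | hP c => exact reduced_zero_eq_mul c ▸ isHermitian_mul_conjTranspose_self _
  | hswap s a c h => simpa [reduced_adjSwap] using h

lemma trace_reduced (a : Fin 3) (c : Tensor) : (reduced c a).trace = normSq c := by
  induction a, c using forall_party with
  | hP c => simp [reduced, trace, rho1, normSq, Complex.mul_conj']
  | hswap s a c h => simpa [reduced_adjSwap, normSq_adjSwap] using h

lemma normSq_smul (z : ℂ) (c : Tensor) : normSq (z • c) = ‖z‖ ^ 2 * normSq c := by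
  simp only [normSq, Pi.smul_apply, smul_eq_mul, norm_mul, mul_pow, Finset.mul_sum]

lemma sq_norm_le_normSq (c : Tensor) : ‖c‖ ^ 2 ≤ normSq c := by
  have hentry (i j k) : ‖c i j k‖ ^ 2 ≤ normSq c :=
    (Finset.single_le_sum (f := fun k => ‖c i j k‖ ^ 2) (fun _ _ => by positivity)
      (Finset.mem_univ k)).trans <|
    (Finset.single_le_sum (f := fun j => ∑ k, ‖c i j k‖ ^ 2) (fun _ _ => by positivity)
      (Finset.mem_univ j)).trans <|
    (Finset.single_le_sum (f := fun i => ∑ j, ∑ k, ‖c i j k‖ ^ 2) (fun _ _ => by positivity)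
      (Finset.mem_univ i))
  rw [← Real.le_sqrt (norm_nonneg c) (by unfold normSq; positivity)]
  simp only [pi_norm_le_iff_of_nonneg (Real.sqrt_nonneg _)]
  exact fun i j k => Real.le_sqrt_of_sq_le (hentry i j k)

lemma continuous_normSq : Continuous normSq := by
  unfold normSq; fun_prop

/-! ### Generators of the moment cone -/

/-- A `3 × 3` array of real weights, with one row for each party. -/
abbrev Weight := Fin 3 → Fin 3 → ℝ

/-- The coordinate `y ↦ y a i`. -/
def entry (a i : Fin 3) : Module.Dual ℝ Weight :=
  LinearMap.proj i ∘ₗ LinearMap.proj (φ := fun _ => Fin 3 → ℝ) a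

@[simp] lemma entry_apply (a i : Fin 3) (y : Weight) : entry a i y = y a i := rfl

/-- The functionals cutting out the Weyl chamber `0 ≤ y a 0 ≤ y a 1 ≤ y a 2`. -/
def gap (p : Fin 3 × Fin 3) : Module.Dual ℝ Weight :=
  ![entry p.1 0, entry p.1 1 - entry p.1 0, entry p.1 2 - entry p.1 1] p.2

/-- Coefficients of right-hand side minus left-hand side in the seven families of inequalities;
the three rows belong to the parties `a`, `b` and `c`. -/
def slackCoeff : Fin 7 → Fin 3 → Fin 3 → ℤ := ![
  ![![-1, -1, 0], ![1, 1, 0], ![1, 1, 0]],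
  ![![-1, 0, -1], ![1, 1, 0], ![1, 0, 1]],
  ![![0, -1, -1], ![1, 1, 0], ![0, 1, 1]],
  ![![-1, -2, 0], ![1, 2, 0], ![1, 2, 0]],
  ![![-2, -1, 0], ![1, 2, 0], ![2, 1, 0]],
  ![![0, -2, -1], ![1, 2, 0], ![0, 2, 1]],
  ![![0, -2, -1], ![2, 1, 0], ![0, 1, 2]]]

/-- Right-hand side minus left-hand side of the `m`-th inequality for the parties `a`, `b`, `c`. -/
def slack (m : Fin 7) (a b c : Fin 3) : Module.Dual ℝ Weight :=
  ∑ i, (slackCoeff m 0 i • entry a i + slackCoeff m 1 i • entry b i + slackCoeff m 2 i • entry c i)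

lemma slack_apply (m : Fin 7) (a b c : Fin 3) (y : Weight) :
    slack m a b c y = ∑ i,
      (slackCoeff m 0 i * y a i + slackCoeff m 1 i * y b i + slackCoeff m 2 i * y c i) := by
  simp [slack]

lemma gap_comp_perm (p : Fin 3 × Fin 3) (σ : Equiv.Perm (Fin 3)) (y : Weight) :
    gap p (y ∘ σ) = gap (σ p.1, p.2) y := by
  obtain ⟨a, k⟩ := p
  fin_cases k <;> rfl

lemma slack_comp_perm (m : Fin 7) (a b c : Fin 3) (σ : Equiv.Perm (Fin 3)) (y : Weight) :
    slack m a b c (y ∘ σ) = slack m (σ a) (σ b) (σ c) y := by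
  simp only [slack_apply, Function.comp_apply]

/-- Membership in the cone over the polytope described by the theorem. -/
structure IsMomentWeight (y : Weight) : Prop where
  gap_nonneg : ∀ p, 0 ≤ gap p y
  slack_nonneg : ∀ m a b c, a ≠ b → a ≠ c → b ≠ c → 0 ≤ slack m a b c y
  sum_eq : ∀ a b, ∑ i, y a i = ∑ i, y b i

lemma IsMomentWeight.comp_perm {y : Weight} (hy : IsMomentWeight y) (σ : Equiv.Perm (Fin 3)) :
    IsMomentWeight (y ∘ σ) where
  gap_nonneg p := gap_comp_perm p σ y ▸ hy.gap_nonneg _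
  slack_nonneg m a b c hab hac hbc := slack_comp_perm m a b c σ y ▸
    hy.slack_nonneg m _ _ _ (σ.injective.ne hab) (σ.injective.ne hac) (σ.injective.ne hbc)
  sum_eq a b := hy.sum_eq (σ a) (σ b)

/-- The weights of the semi-invariants constructed below. -/
def generator : Fin 11 → Fin 3 → Fin 3 → ℕ := ![
  ![![0, 0, 1], ![0, 0, 1], ![0, 0, 1]],
  ![![0, 0, 2], ![0, 1, 1], ![0, 1, 1]],
  ![![0, 2, 2], ![0, 2, 2], ![0, 2, 2]],
  ![![0, 0, 3], ![1, 1, 1], ![1, 1, 1]],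
  ![![0, 1, 2], ![0, 1, 2], ![1, 1, 1]],
  ![![3, 3, 3], ![3, 3, 3], ![3, 3, 3]],
  ![![0, 1, 3], ![0, 2, 2], ![1, 1, 2]],
  ![![0, 3, 3], ![0, 3, 3], ![2, 2, 2]],
  ![![0, 3, 3], ![1, 1, 4], ![1, 1, 4]],
  ![![0, 3, 3], ![1, 1, 4], ![2, 2, 2]],
  ![![0, 6, 6], ![4, 4, 4], ![4, 4, 4]]]

/-- An integral weight that is a `generator` up to a permutation of the parties. -/
def IsGenerator (v : Fin 3 → Fin 3 → ℕ) : Prop :=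
  ∃ (j : Fin 11) (σ : Equiv.Perm (Fin 3)), v = generator j ∘ σ

instance (v : Fin 3 → Fin 3 → ℕ) : Decidable (IsGenerator v) :=
  inferInstanceAs (Decidable (∃ (j : Fin 11) (σ : Equiv.Perm (Fin 3)), v = generator j ∘ σ))

/-- An integral weight, regarded as a real one. -/
def castWeight (v : Fin 3 → Fin 3 → ℕ) : Weight := fun a i => v a i

/-- The values of the functionals `gap` at an integral weight. -/
def intGap (v : Fin 3 → Fin 3 → ℕ) (p : Fin 3 × Fin 3) : ℤ :=
  ![(v p.1 0 : ℤ), v p.1 1 - v p.1 0, v p.1 2 - v p.1 1] p.2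

lemma gap_castWeight (v : Fin 3 → Fin 3 → ℕ) (p : Fin 3 × Fin 3) :
    gap p (castWeight v) = intGap v p := by
  obtain ⟨a, k⟩ := p
  fin_cases k <;> simp [gap, intGap, castWeight]

theorem exists_smul_sub_tight {ι E : Type*} [Finite ι] [AddCommGroup E] [Module ℝ E]
    (h : ι → Module.Dual ℝ E) {y r : E} (hy : ∀ i, 0 ≤ h i y) (hr : ∃ i, 0 < h i r) :
    ∃ t : ℝ, 0 ≤ t ∧ (∀ i, 0 ≤ h i (y - t • r)) ∧ ∃ i, 0 < h i r ∧ h i (y - t • r) = 0 := by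
  have : Nonempty {i // 0 < h i r} := let ⟨i, hi⟩ := hr; ⟨⟨i, hi⟩⟩
  obtain ⟨⟨j, hj⟩, hmin⟩ := Finite.exists_min fun i : {i // 0 < h i r} => h i y / h i r
  have ht : 0 ≤ h j y / h j r := div_nonneg (hy j) hj.le
  refine ⟨h j y / h j r, ht, fun i => ?_, j, hj, ?_⟩
  · rw [map_sub, map_smul, smul_eq_mul, sub_nonneg]
    rcases lt_or_ge 0 (h i r) with hi | hi
    · exact (le_div_iff₀ hi).1 (hmin ⟨i, hi⟩)
    · exact (mul_nonpos_of_nonneg_of_nonpos ht hi).trans (hy i)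
  · rw [map_sub, map_smul, smul_eq_mul, div_mul_cancel₀ _ hj.ne', sub_self]

/-- Triples of distinct parties. -/
abbrev Triple := {p : Fin 3 × Fin 3 × Fin 3 // p.1 ≠ p.2.1 ∧ p.1 ≠ p.2.2 ∧ p.2.1 ≠ p.2.2}

lemma IsMomentWeight.exists_peel {y r : Weight} (hy : IsMomentWeight y)
    (hsum : ∀ a b, ∑ i, r a i = ∑ i, r b i) (hr : ∃ p, 0 < gap p r) :
    ∃ t : ℝ, 0 ≤ t ∧ IsMomentWeight (y - t • r) ∧
      ((∃ p, 0 < gap p r ∧ gap p (y - t • r) = 0) ∨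
        ∃ m a b c, a ≠ b ∧ a ≠ c ∧ b ≠ c ∧ slack m a b c (y - t • r) = 0) := by
  obtain ⟨t, ht, hnonneg, i, hir, hi⟩ := exists_smul_sub_tight
    (Sum.elim gap fun q : Fin 7 × Triple => slack q.1 q.2.1.1 q.2.1.2.1 q.2.1.2.2)
    (y := y) (r := r) (Sum.rec hy.gap_nonneg fun q =>
      hy.slack_nonneg _ _ _ _ q.2.2.1 q.2.2.2.1 q.2.2.2.2) (hr.imp' Sum.inl fun _ => id)
  refine ⟨t, ht, ⟨fun p => hnonneg (.inl p), fun m a b c hab hac hbc =>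
    hnonneg (.inr (m, ⟨(a, b, c), hab, hac, hbc⟩)), fun a b => ?_⟩, ?_⟩
  · simp only [Pi.sub_apply, Pi.smul_apply, Finset.sum_sub_distrib, ← Finset.smul_sum,
      hy.sum_eq a b, hsum a b]
  · rcases i with p | ⟨m, ⟨a, b, c⟩, hab, hac, hbc⟩
    · exact .inl ⟨p, hir, hi⟩
    · exact .inr ⟨m, a, b, c, hab, hac, hbc, hi⟩

/-- A convex cone of weights containing all permuted generators. The aim is to show that it
contains every moment weight. -/
structure ContainsGenerators (K : PointedCone ℝ Weight) : Prop where
  comp_perm : ∀ {y}, y ∈ K → ∀ σ : Equiv.Perm (Fin 3), y ∘ σ ∈ K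
  generator_mem : ∀ j, castWeight (generator j) ∈ K

section cone
variable {K : PointedCone ℝ Weight}

lemma ContainsGenerators.castWeight_mem (hK : ContainsGenerators K) {v : Fin 3 → Fin 3 → ℕ}
    (hv : IsGenerator v) : castWeight v ∈ K := by
  obtain ⟨j, σ, rfl⟩ := hv
  exact hK.comp_perm (hK.generator_mem j) σ

lemma ContainsGenerators.mem_of_comp_perm (hK : ContainsGenerators K) {y : Weight}
    {σ : Equiv.Perm (Fin 3)} (h : y ∘ σ ∈ K) : y ∈ K := by
  simpa [Function.comp_assoc] using hK.comp_perm h σ⁻¹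

lemma ContainsGenerators.mem_of_eq_sum (hK : ContainsGenerators K) {n : ℕ} {y : Weight}
    (c : Fin n → ℝ) (v : Fin n → Fin 3 → Fin 3 → ℕ) (hc : ∀ j, 0 ≤ c j)
    (hv : ∀ j, IsGenerator (v j)) (h : ∀ a i, y a i = ∑ j, c j * v j a i) : y ∈ K := by
  have : y = ∑ j, c j • castWeight (v j) := by
    ext a i
    simp only [h, castWeight, Finset.sum_apply, Pi.smul_apply, smul_eq_mul]
  rw [this]
  exact Submodule.sum_mem _ fun j _ => PointedCone.smul_mem K (hc j) (hK.castWeight_mem (hv j))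

/-- The facet `slack m 0 1 2 y = 0` is a simplicial cone; these are its rays. -/
def facetRay : Fin 7 → Fin 6 → Fin 3 → Fin 3 → ℕ := ![
  ![![![0, 0, 1], ![0, 0, 1], ![0, 0, 1]], ![![0, 1, 1], ![0, 0, 2], ![0, 1, 1]],
    ![![0, 1, 1], ![0, 1, 1], ![0, 0, 2]], ![![1, 1, 1], ![0, 0, 3], ![1, 1, 1]],
    ![![1, 1, 1], ![0, 1, 2], ![0, 1, 2]], ![![1, 1, 1], ![1, 1, 1], ![0, 0, 3]]],
  ![![![0, 0, 1], ![0, 0, 1], ![0, 0, 1]], ![![0, 0, 2], ![0, 1, 1], ![0, 1, 1]],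
    ![![0, 1, 1], ![0, 0, 2], ![0, 1, 1]], ![![1, 1, 1], ![0, 0, 3], ![1, 1, 1]],
    ![![1, 1, 2], ![0, 1, 3], ![0, 2, 2]], ![![1, 1, 4], ![1, 1, 4], ![0, 3, 3]]],
  ![![![0, 0, 1], ![0, 0, 1], ![0, 0, 1]], ![![0, 1, 1], ![0, 0, 2], ![0, 1, 1]],
    ![![0, 1, 2], ![0, 1, 2], ![1, 1, 1]], ![![0, 2, 2], ![0, 1, 3], ![1, 1, 2]],
    ![![0, 3, 3], ![1, 1, 4], ![2, 2, 2]], ![![1, 1, 1], ![0, 0, 3], ![1, 1, 1]]],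
  ![![![0, 0, 1], ![0, 0, 1], ![0, 0, 1]], ![![0, 1, 1], ![0, 0, 2], ![0, 1, 1]],
    ![![0, 1, 1], ![0, 1, 1], ![0, 0, 2]], ![![0, 3, 3], ![1, 1, 4], ![1, 1, 4]],
    ![![1, 1, 1], ![0, 0, 3], ![1, 1, 1]], ![![1, 1, 1], ![1, 1, 1], ![0, 0, 3]]],
  ![![![0, 0, 1], ![0, 0, 1], ![0, 0, 1]], ![![0, 1, 1], ![0, 0, 2], ![0, 1, 1]],
    ![![1, 1, 1], ![0, 0, 3], ![1, 1, 1]], ![![1, 1, 1], ![0, 1, 2], ![0, 1, 2]],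
    ![![1, 1, 1], ![1, 1, 1], ![0, 0, 3]], ![![2, 2, 2], ![1, 1, 4], ![0, 3, 3]]],
  ![![![0, 0, 1], ![0, 0, 1], ![0, 0, 1]], ![![0, 1, 1], ![0, 0, 2], ![0, 1, 1]],
    ![![0, 2, 2], ![0, 1, 3], ![1, 1, 2]], ![![0, 3, 3], ![1, 1, 4], ![1, 1, 4]],
    ![![0, 3, 3], ![1, 1, 4], ![2, 2, 2]], ![![1, 1, 1], ![0, 0, 3], ![1, 1, 1]]],
  ![![![0, 1, 1], ![0, 0, 2], ![0, 1, 1]], ![![0, 1, 2], ![0, 1, 2], ![1, 1, 1]],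
    ![![0, 2, 2], ![0, 1, 3], ![1, 1, 2]], ![![0, 3, 3], ![0, 3, 3], ![2, 2, 2]],
    ![![0, 3, 3], ![1, 1, 4], ![2, 2, 2]], ![![1, 1, 1], ![0, 0, 3], ![1, 1, 1]]]]

/-- The coordinates on the facet `slack m 0 1 2 y = 0` dual to the rays `facetRay m`. -/
def facetCoord : Fin 7 → Fin 6 → Module.Dual ℝ Weight := ![
  ![gap (0, 2), slack 4 0 2 1, slack 4 0 1 2,
    gap (2, 0), slack 3 0 1 2, gap (1, 0)],
  ![gap (2, 2), slack 5 2 1 0, gap (0, 1),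
    gap (2, 0), slack 3 2 0 1, gap (1, 0)],
  ![slack 6 0 1 2, gap (2, 1), slack 5 0 1 2,
    slack 4 2 1 0, gap (1, 0), gap (0, 0)],
  ![gap (0, 2), gap (2, 1), gap (1, 1),
    slack 0 0 1 2, slack 1 1 2 0, slack 1 2 1 0],
  ![gap (0, 2), gap (0, 1), gap (2, 0),
    gap (1, 1), slack 2 2 1 0, slack 0 0 1 2],
  ![gap (0, 2), gap (2, 1), gap (1, 1),
    slack 2 0 1 2, slack 1 2 1 0, gap (0, 0)],
  ![gap (2, 1), gap (0, 2), gap (2, 2),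
    slack 2 0 1 2, gap (1, 0), gap (0, 0)]]

lemma isGenerator_facetRay : ∀ m j, IsGenerator (facetRay m j) := by decide

lemma IsMomentWeight.facetCoord_nonneg {y : Weight} (hy : IsMomentWeight y) (m : Fin 7)
    (j : Fin 6) : 0 ≤ facetCoord m j y := by
  fin_cases m <;> fin_cases j <;> first
    | exact hy.gap_nonneg _
    | exact hy.slack_nonneg _ _ _ _ (by decide) (by decide) (by decide)

set_option maxHeartbeats 1000000 in
-- One linear identity for each of the 63 triples `(m, a, i)`.
lemma IsMomentWeight.eq_sum_facetCoord {y : Weight} (hy : IsMomentWeight y) {m : Fin 7}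
    (hm : slack m 0 1 2 y = 0) (a i : Fin 3) :
    y a i = ∑ j, facetCoord m j y * facetRay m j a i := by
  have h1 := hy.sum_eq 0 1
  have h2 := hy.sum_eq 0 2
  rw [Fin.sum_univ_three, Fin.sum_univ_three] at h1 h2
  fin_cases m <;> simp [slack_apply, Fin.sum_univ_three, slackCoeff] at hm <;>
    fin_cases a <;> fin_cases i <;>
    simp [facetCoord, facetRay, slack_apply, slackCoeff, gap, Fin.sum_univ_succ] <;> linarith

lemma exists_perm_apply_eq {a b c : Fin 3} (hab : a ≠ b) (hac : a ≠ c) (hbc : b ≠ c) :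
    ∃ σ : Equiv.Perm (Fin 3), σ 0 = a ∧ σ 1 = b ∧ σ 2 = c := by
  revert a b c
  decide

lemma ContainsGenerators.mem_of_slack_eq_zero (hK : ContainsGenerators K) {y : Weight}
    (hy : IsMomentWeight y) {m : Fin 7} {a b c : Fin 3} (hab : a ≠ b) (hac : a ≠ c) (hbc : b ≠ c)
    (h : slack m a b c y = 0) : y ∈ K := by
  obtain ⟨σ, rfl, rfl, rfl⟩ := exists_perm_apply_eq hab hac hbc
  have hσ : slack m 0 1 2 (y ∘ σ) = 0 := (slack_comp_perm m 0 1 2 σ y).trans h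
  exact hK.mem_of_comp_perm <| hK.mem_of_eq_sum _ _ ((hy.comp_perm σ).facetCoord_nonneg m)
    (isGenerator_facetRay m) ((hy.comp_perm σ).eq_sum_facetCoord hσ)

/-- The face of the moment cone where the functionals `gap p`, `p ∈ Z`, vanish is contained
in `K`. -/
def FaceLE (K : PointedCone ℝ Weight) (Z : Finset (Fin 3 × Fin 3)) : Prop :=
  ∀ ⦃y⦄, IsMomentWeight y → (∀ p ∈ Z, gap p y = 0) → y ∈ K

lemma FaceLE.of_perm_subset (hK : ContainsGenerators K) {Z Z' : Finset (Fin 3 × Fin 3)}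
    (hZ : FaceLE K Z) (σ : Equiv.Perm (Fin 3)) (h : ∀ p ∈ Z, (σ p.1, p.2) ∈ Z') : FaceLE K Z' :=
  fun y hy hyZ => hK.mem_of_comp_perm <|
    hZ (hy.comp_perm σ) fun p hp => (gap_comp_perm p σ y).trans (hyZ _ (h p hp))

/-- Peeling off the largest multiple of a generator `v` from a point of a face leads to a smaller
face or to a facet `slack m a b c y = 0`. -/
lemma FaceLE.of_peel (hK : ContainsGenerators K) {Z : Finset (Fin 3 × Fin 3)}
    (v : Fin 3 → Fin 3 → ℕ) (faces : List (Finset (Fin 3 × Fin 3)))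
    (hfaces : ∀ Z' ∈ faces, FaceLE K Z') (hv : IsGenerator v)
    (hsum : ∀ a b, ∑ i, v a i = ∑ i, v b i) (hvZ : ∀ p ∈ Z, intGap v p = 0)
    (hpos : ∃ p, 0 < intGap v p)
    (hcover : ∀ p, 0 < intGap v p → ∃ Z' ∈ faces, ∃ σ : Equiv.Perm (Fin 3),
      ∀ q ∈ Z', (σ q.1, q.2) ∈ insert p Z) : FaceLE K Z := by
  intro y hy hyZ
  obtain ⟨t, ht, hpeel, htight⟩ := hy.exists_peel (r := castWeight v)
    (fun a b => by simp only [castWeight]; exact_mod_cast hsum a b)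
    (hpos.imp fun p hp => by rw [gap_castWeight]; exact_mod_cast hp)
  suffices hmem : y - t • castWeight v ∈ K by
    simpa using K.add_mem hmem (PointedCone.smul_mem K ht (hK.castWeight_mem hv))
  rcases htight with ⟨p, hp, hzero⟩ | ⟨m, a, b, c, hab, hac, hbc, hzero⟩
  · obtain ⟨Z', hZ', σ, hσ⟩ := hcover p (by rw [gap_castWeight] at hp; exact_mod_cast hp)
    refine (hfaces Z' hZ').of_perm_subset hK σ hσ hpeel ?_
    rintro q hq
    obtain rfl | hq := Finset.mem_insert.1 hq
    · exact hzero
    · rw [map_sub, map_smul, hyZ q hq, gap_castWeight, hvZ q hq]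
      simp
  · exact hK.mem_of_slack_eq_zero hpeel hab hac hbc hzero

/- In the names of faces, `pure` stands for a row `(0, 0, s)`, `lower` for `y a 0 = y a 1`,
`uniform` for a constant row and `zero` for a vanishing one. -/

/-- If `y 1 = (0, 0, s)` then `y 0 = y 2`. -/
lemma faceLE_pure (hK : ContainsGenerators K) : FaceLE K {(1, 0), (1, 1)} := by
  intro y hy hyZ
  refine hK.mem_of_eq_sum ![gap (0, 2) y, gap (0, 1) y, gap (0, 0) y]
    ![![![0, 0, 1], ![0, 0, 1], ![0, 0, 1]],
      ![![0, 1, 1], ![0, 0, 2], ![0, 1, 1]],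
      ![![1, 1, 1], ![0, 0, 3], ![1, 1, 1]]] ?_ (by decide) ?_
  · simp [Fin.forall_fin_succ, hy.gap_nonneg]
  · have h1 := hy.sum_eq 0 1
    have h2 := hy.sum_eq 0 2
    have h3 := hy.slack_nonneg 0 0 1 2 (by decide) (by decide) (by decide)
    have h4 := hy.slack_nonneg 0 2 1 0 (by decide) (by decide) (by decide)
    have h5 := hy.slack_nonneg 1 0 1 2 (by decide) (by decide) (by decide)
    have h6 := hy.slack_nonneg 1 2 1 0 (by decide) (by decide) (by decide)
    simp [slack_apply, Fin.sum_univ_succ, slackCoeff, gap] at hyZ h1 h2 h3 h4 h5 h6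
    intro a i
    fin_cases a <;> fin_cases i <;> simp [Fin.sum_univ_succ, gap] <;> linarith

lemma faceLE_uniform_uniform (hK : ContainsGenerators K) :
    FaceLE K {(1, 1), (1, 2), (2, 1), (2, 2)} := by
  intro y hy hyZ
  refine hK.mem_of_eq_sum ![gap (0, 2) y / 3, gap (0, 1) y / 6, gap (0, 0) y / 3]
    ![![![0, 0, 3], ![1, 1, 1], ![1, 1, 1]],
      ![![0, 6, 6], ![4, 4, 4], ![4, 4, 4]],
      ![![3, 3, 3], ![3, 3, 3], ![3, 3, 3]]] ?_ (by decide) ?_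
  · simp [Fin.forall_fin_succ, hy.gap_nonneg, div_nonneg]
  · have h1 := hy.sum_eq 0 1
    have h2 := hy.sum_eq 0 2
    simp [Fin.sum_univ_succ, gap] at hyZ h1 h2
    intro a i
    fin_cases a <;> fin_cases i <;> simp [Fin.sum_univ_succ, gap] <;> linarith

lemma faceLE_lower_lower_uniform (hK : ContainsGenerators K) :
    FaceLE K {(0, 1), (1, 1), (2, 1), (2, 2)} := by
  intro y hy hyZ
  refine hK.mem_of_eq_sum ![gap (0, 2) y / 3, gap (1, 2) y / 3, slack 0 2 0 1 y / 6]
    ![![![0, 0, 3], ![1, 1, 1], ![1, 1, 1]],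
      ![![1, 1, 1], ![0, 0, 3], ![1, 1, 1]],
      ![![3, 3, 3], ![3, 3, 3], ![3, 3, 3]]] ?_ (by decide) ?_
  · simp [Fin.forall_fin_succ, hy.gap_nonneg, hy.slack_nonneg, div_nonneg]
  · have h1 := hy.sum_eq 0 1
    have h2 := hy.sum_eq 0 2
    simp [Fin.sum_univ_succ, gap] at hyZ h1 h2
    intro a i
    fin_cases a <;> fin_cases i <;> simp [slack_apply, Fin.sum_univ_succ, slackCoeff, gap] <;>
      linarith

lemma faceLE_zero : FaceLE K {(2, 0), (2, 1), (2, 2)} := by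
  intro y hy hyZ
  have h1 := hy.sum_eq 0 2
  have h2 := hy.sum_eq 1 2
  have h := hy.gap_nonneg
  simp [gap, Fin.sum_univ_succ, Fin.forall_fin_succ] at hyZ h1 h2 h
  have : y = 0 := by
    ext a i
    fin_cases a <;> fin_cases i <;> simp <;> linarith
  exact this ▸ K.zero_mem

lemma faceLE_lower_uniform (hK : ContainsGenerators K) : FaceLE K {(1, 1), (2, 1), (2, 2)} := by
  apply FaceLE.of_peel hK ![![0, 3, 3], ![1, 1, 4], ![2, 2, 2]]
    [{(0, 1), (1, 1), (2, 1), (2, 2)}, {(1, 1), (1, 2), (2, 1), (2, 2)}, {(1, 0), (1, 1)},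
    {(2, 0), (2, 1), (2, 2)}] <;> try decide
  simp [faceLE_pure hK, faceLE_uniform_uniform hK, faceLE_lower_lower_uniform hK, faceLE_zero]

lemma faceLE_lower_lower_lower (hK : ContainsGenerators K) : FaceLE K {(0, 1), (1, 1), (2, 1)} := by
  apply FaceLE.of_peel hK ![![0, 0, 1], ![0, 0, 1], ![0, 0, 1]]
    [{(0, 1), (1, 1), (2, 1), (2, 2)}] <;> try decide
  simp [faceLE_lower_lower_uniform hK]

lemma faceLE_uniform (hK : ContainsGenerators K) : FaceLE K {(2, 1), (2, 2)} := by
  apply FaceLE.of_peel hK ![![0, 3, 3], ![0, 3, 3], ![2, 2, 2]]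
    [{(1, 1), (2, 1), (2, 2)}, {(2, 0), (2, 1), (2, 2)}] <;> try decide
  simp [faceLE_lower_uniform hK, faceLE_zero]

lemma faceLE_lower_lower (hK : ContainsGenerators K) : FaceLE K {(1, 1), (2, 1)} := by
  apply FaceLE.of_peel hK ![![0, 3, 3], ![1, 1, 4], ![1, 1, 4]]
    [{(0, 1), (1, 1), (2, 1)}, {(1, 1), (2, 1), (2, 2)}, {(1, 0), (1, 1)}] <;> try decide
  simp [faceLE_lower_uniform hK, faceLE_lower_lower_lower hK, faceLE_pure hK]

lemma faceLE_lower (hK : ContainsGenerators K) : FaceLE K {(0, 1)} := by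
  apply FaceLE.of_peel hK ![![0, 0, 2], ![0, 1, 1], ![0, 1, 1]]
    [{(2, 1), (2, 2)}, {(1, 1), (2, 1)}] <;> try decide
  simp [faceLE_uniform hK, faceLE_lower_lower hK]

lemma ContainsGenerators.mem_of_isMomentWeight (hK : ContainsGenerators K) {y : Weight}
    (hy : IsMomentWeight y) : y ∈ K := by
  suffices h : FaceLE K ∅ from h hy (by simp)
  apply FaceLE.of_peel hK ![![0, 2, 2], ![0, 2, 2], ![0, 2, 2]] [{(0, 1)}] <;> try decide
  simp [faceLE_lower hK]

end cone

/-! ### Minimizers on Borel orbits -/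

section optimality
variable {n : Type*} [Fintype n]

lemma re_trace_diagonal_mul_mul [DecidableEq n] (d : n → ℝ) (ρ : Matrix n n ℂ) :
    (trace (diagonal (fun i => (d i : ℂ)) * ρ * (diagonal fun i => (d i : ℂ))ᴴ)).re =
      ∑ i, d i ^ 2 * (ρ i i).re := by
  rw [diagonal_conjTranspose, trace, Complex.re_sum]
  refine Finset.sum_congr rfl fun i _ => ?_
  rw [diag_apply, mul_diagonal, diagonal_mul, Pi.star_apply, Complex.star_def, Complex.conj_ofReal,
    Complex.re_mul_ofReal, Complex.re_ofReal_mul]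
  ring

lemma re_trace_transvection_mul_mul [DecidableEq n] {i j : n} {ρ : Matrix n n ℂ}
    (hρ : ρ.IsHermitian) (z : ℂ) :
    (trace (transvection i j z * ρ * (transvection i j z)ᴴ)).re =
      ρ.trace.re + 2 * (z * ρ j i).re + ‖z‖ ^ 2 * (ρ j j).re := by
  have hij : ρ i j = star (ρ j i) := (hρ.apply i j).symm
  simp only [transvection, conjTranspose_add, conjTranspose_one, conjTranspose_single, add_mul,
    mul_add, Matrix.one_mul, Matrix.mul_one, trace_add, trace_single_mul, trace_mul_single,
    Matrix.mul_assoc, mul_single_apply_same, hij, Complex.sq_norm, Complex.normSq_apply,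
    op_smul_eq_smul, smul_eq_mul, Complex.star_def, Complex.add_re, Complex.mul_re, Complex.mul_im,
    Complex.conj_re, Complex.conj_im]
  ring

lemma eq_of_exp_mul_le {p q : ℝ}
    (h : ∀ t : ℝ, Real.exp (2 * q * t) ≤ 1 + (Real.exp (2 * t) - 1) * p) : p = q := by
  let g : ℝ → ℝ := fun t => 1 + (Real.exp (2 * t) - 1) * p - Real.exp (2 * q * t)
  have hmin : IsLocalMin g 0 := Filter.Eventually.of_forall fun t => by simpa [g] using h t
  have hderiv : HasDerivAt g (2 * p - 2 * q) 0 := by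
    have hexp (r : ℝ) : HasDerivAt (fun t => Real.exp (r * t)) r 0 := by
      simpa using ((hasDerivAt_id (0 : ℝ)).const_mul r).exp
    exact ((((hexp 2).sub_const 1).mul_const p).const_add 1).sub (hexp (2 * q))
  linarith [hmin.hasDerivAt_eq_zero hderiv]

lemma eq_zero_of_forall_mul_add_mul_sq_nonneg {a b : ℝ} (h : ∀ t : ℝ, 0 ≤ b * t + a * t ^ 2) :
    b = 0 := by
  have := discrim_le_zero (a := a) (b := b) (c := 0) fun t => by linarith [h t]
  rw [discrim] at this
  nlinarith

/-- The function `A ↦ tr (A ρ Aᴴ) / ∏ i, |A i i| ^ (2 * w i)` on the invertible upper triangular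
matrices is at least `1`, hence minimal at `A = 1` if `ρ` has trace `1`. -/
def IsBorelMinimal [LinearOrder n] (ρ : Matrix n n ℂ) (w : n → ℝ) : Prop :=
  ∀ A : Matrix n n ℂ, A.IsUpperTriangular → (∀ i, A i i ≠ 0) →
    Real.exp (2 * ∑ i, w i * Real.log ‖A i i‖) ≤ (trace (A * ρ * Aᴴ)).re

namespace IsBorelMinimal

variable [LinearOrder n] {ρ : Matrix n n ℂ} {w : n → ℝ}

lemma re_apply_self (h : IsBorelMinimal ρ w) (htr : ρ.trace = 1) (i : n) : (ρ i i).re = w i := by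
  have htr' : ρ.trace.re = 1 := congrArg Complex.re htr
  refine eq_of_exp_mul_le fun t => ?_
  let d : n → ℝ := fun j => Real.exp (if j = i then t else 0)
  calc Real.exp (2 * w i * t) = Real.exp (2 * ∑ j, w j * Real.log ‖(d j : ℂ)‖) := by
        simp [d, mul_assoc]
    _ ≤ ∑ j, d j ^ 2 * (ρ j j).re := by
        rw [← re_trace_diagonal_mul_mul]
        simpa using h (diagonal fun j => (d j : ℂ)) (blockTriangular_diagonal _)
          fun j => by simp [d]
    _ = ∑ j, ((ρ j j).re + if j = i then (Real.exp (2 * t) - 1) * (ρ j j).re else 0) := by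
        refine Finset.sum_congr rfl fun j _ => ?_
        split_ifs with hj <;> simp [d, hj, ← Real.exp_nat_mul]
        ring
    _ = 1 + (Real.exp (2 * t) - 1) * (ρ i i).re := by
        simp [Finset.sum_add_distrib, ← htr', trace]

lemma apply_eq_zero (h : IsBorelMinimal ρ w) (hρ : ρ.IsHermitian) (htr : ρ.trace = 1) {i j : n}
    (hij : i < j) : ρ j i = 0 := by
  have htr' : ρ.trace.re = 1 := congrArg Complex.re htr
  suffices 2 * ‖ρ j i‖ ^ 2 = 0 by simpa using this
  refine eq_zero_of_forall_mul_add_mul_sq_nonneg (a := ‖ρ j i‖ ^ 2 * (ρ j j).re) fun t => ?_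
  have hone (z : ℂ) (k : n) : transvection i j z k k = 1 := by
    have : ¬(i = k ∧ j = k) := fun hk => hij.ne (hk.1.trans hk.2.symm)
    simp [transvection, this]
  have hle := h (transvection i j (t * star (ρ j i))) (blockTriangular_transvection hij.le _)
    (fun k => by simp [hone])
  have hre : (t * star (ρ j i) * ρ j i).re = t * ‖ρ j i‖ ^ 2 := by
    rw [mul_assoc, Complex.star_def, Complex.conj_mul', Complex.re_ofReal_mul,
      ← Complex.ofReal_pow, Complex.ofReal_re]
  rw [re_trace_transvection_mul_mul hρ, htr', hre] at hle
  simp only [hone, norm_one, Real.log_one, mul_zero, Finset.sum_const_zero, Real.exp_zero,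
    norm_mul, Complex.norm_real, Real.norm_eq_abs, norm_star, mul_pow, sq_abs] at hle
  linarith

lemma eq_diagonal (h : IsBorelMinimal ρ w) (hρ : ρ.IsHermitian) (htr : ρ.trace = 1) :
    ρ = diagonal fun i => (w i : ℂ) := by
  ext i j
  obtain hij | rfl | hij := lt_trichotomy i j
  · rw [diagonal_apply_ne _ hij.ne, ← hρ.apply, h.apply_eq_zero hρ htr hij, star_zero]
  · rw [diagonal_apply_eq, ← h.re_apply_self htr]
    exact (hρ.coe_re_apply_self i).symm
  · rw [diagonal_apply_ne _ hij.ne', h.apply_eq_zero hρ htr hij]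

end IsBorelMinimal

end optimality

/-- Triples of invertible upper triangular matrices. -/
def IsBorel (M : Fin 3 → Matrix (Fin 3) (Fin 3) ℂ) : Prop :=
  ∀ a, (M a).IsUpperTriangular ∧ ∀ i, M a i i ≠ 0

/-- The logarithm of the real character `M ↦ ∏ a, ∏ i, |M a i i| ^ y a i` of the Borel subgroup. -/
noncomputable def logChar (y : Weight) (M : Fin 3 → Matrix (Fin 3) (Fin 3) ℂ) : ℝ :=
  ∑ a, ∑ i, y a i * Real.log ‖M a i i‖

lemma mul_apply_self_of_isUpperTriangular {n R : Type*} [Fintype n] [LinearOrder n]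
    [NonUnitalNonAssocSemiring R] {A B : Matrix n n R} (hA : A.IsUpperTriangular)
    (hB : B.IsUpperTriangular) (i : n) : (A * B) i i = A i i * B i i := by
  rw [mul_apply]
  refine Finset.sum_eq_single i (fun j _ hj => ?_) (by simp)
  rcases hj.lt_or_gt with hj | hj
  · rw [hA hj, zero_mul]
  · rw [hB hj, mul_zero]

lemma IsBorel.mul {M N : Fin 3 → Matrix (Fin 3) (Fin 3) ℂ} (hM : IsBorel M) (hN : IsBorel N) :
    IsBorel (M * N) := fun a => ⟨(hM a).1.mul (hN a).1, fun i => by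
  rw [Pi.mul_apply, mul_apply_self_of_isUpperTriangular (hM a).1 (hN a).1]
  exact mul_ne_zero ((hM a).2 i) ((hN a).2 i)⟩

lemma isBorel_one : IsBorel 1 := fun _ => ⟨blockTriangular_one, fun _ => by simp⟩

lemma isBorel_mulSingle {A : Matrix (Fin 3) (Fin 3) ℂ} (hA : A.IsUpperTriangular)
    (hdiag : ∀ i, A i i ≠ 0) (a : Fin 3) : IsBorel (Pi.mulSingle a A) := fun b => by
  obtain rfl | h := eq_or_ne b a
  · simpa using ⟨hA, hdiag⟩
  · simpa [h] using isBorel_one b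

lemma logChar_mul (y : Weight) {M N : Fin 3 → Matrix (Fin 3) (Fin 3) ℂ} (hM : IsBorel M)
    (hN : IsBorel N) : logChar y (M * N) = logChar y M + logChar y N := by
  simp only [logChar, ← Finset.sum_add_distrib, ← mul_add]
  refine Finset.sum_congr rfl fun a _ => Finset.sum_congr rfl fun i _ => ?_
  rw [Pi.mul_apply, mul_apply_self_of_isUpperTriangular (hM a).1 (hN a).1, norm_mul,
    Real.log_mul (norm_ne_zero_iff.2 ((hM a).2 i)) (norm_ne_zero_iff.2 ((hN a).2 i))]

@[simp] lemma logChar_one (y : Weight) : logChar y 1 = 0 := by simp [logChar]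

lemma logChar_mulSingle (y : Weight) (a : Fin 3) (A : Matrix (Fin 3) (Fin 3) ℂ) :
    logChar y (Pi.mulSingle a A) = ∑ i, y a i * Real.log ‖A i i‖ := by
  rw [logChar, Fintype.sum_eq_single a fun b hb => by simp [hb], Pi.mulSingle_eq_same]

lemma IsBorel.act_ne_zero {M : Fin 3 → Matrix (Fin 3) (Fin 3) ℂ} (hM : IsBorel M) {c : Tensor}
    (hc : c ≠ 0) : act M c ≠ 0 := fun h => hc <| by
  have hinv : (fun a => (M a)⁻¹) * M = 1 := funext fun a => nonsing_inv_mul _ <| by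
    rw [det_of_isUpperTriangular (hM a).1]
    exact (Finset.prod_ne_zero_iff.2 fun i _ => (hM a).2 i).isUnit
  rw [← act_one c, ← hinv, act_mul, h]
  ext; simp [act]

lemma normSq_pos {c : Tensor} (hc : c ≠ 0) : 0 < normSq c :=
  (by positivity : 0 < ‖c‖ ^ 2).trans_le (sq_norm_le_normSq c)

/-- The real character of weight `y` is dominated on the Borel orbit of `c` by the norm, raised to
the power that makes the inequality invariant under scalar matrices. -/
def WeightDominated (c : Tensor) (y : Weight) : Prop :=
  ∃ K : ℝ, ∀ M, IsBorel M → logChar y M ≤ (∑ a, ∑ i, y a i) / 6 * Real.log (normSq (act M c)) + K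

/-- The weights whose real character is dominated on the Borel orbit of `c` form a convex cone. -/
def dominatedCone (c : Tensor) : PointedCone ℝ Weight where
  carrier := {y | WeightDominated c y}
  zero_mem' := ⟨0, fun M _ => by simp [logChar]⟩
  add_mem' := by
    rintro y z ⟨K, hy⟩ ⟨L, hz⟩
    refine ⟨K + L, fun M hM => (le_of_eq ?_).trans ((add_le_add (hy M hM) (hz M hM)).trans_eq ?_)⟩
    · simp only [logChar, Pi.add_apply, add_mul, Finset.sum_add_distrib]
    · simp only [Pi.add_apply, Finset.sum_add_distrib]
      ring
  smul_mem' := by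
    rintro ⟨t, ht⟩ y ⟨K, hy⟩
    refine ⟨t * K, fun M hM => (le_of_eq ?_).trans
      ((mul_le_mul_of_nonneg_left (hy M hM) ht).trans_eq ?_)⟩
    · simp [logChar, Finset.mul_sum, mul_assoc]
    · simp [← Finset.mul_sum]
      ring

section capacity

/-- The Borel orbit of `c`, each point divided by the real character of weight `y`. -/
def normalizedOrbit (y : Weight) (c : Tensor) : Set Tensor :=
  {φ | ∃ M, IsBorel M ∧ φ = (Real.exp (-logChar y M) : ℂ) • act M c}

variable {y : Weight} {c : Tensor}

lemma normSq_exp_smul (t : ℝ) (c : Tensor) :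
    normSq ((Real.exp t : ℂ) • c) = Real.exp (2 * t) * normSq c := by
  rw [normSq_smul, Complex.norm_real, Real.norm_eq_abs, abs_of_pos (Real.exp_pos t),
    ← Real.exp_nat_mul, Nat.cast_two]

lemma smul_act_mem_closure_normalizedOrbit {N : Fin 3 → Matrix (Fin 3) (Fin 3) ℂ} (hN : IsBorel N)
    {φ : Tensor} (hφ : φ ∈ closure (normalizedOrbit y c)) :
    (Real.exp (-logChar y N) : ℂ) • act N φ ∈ closure (normalizedOrbit y c) := by
  have hcont : Continuous fun φ => (Real.exp (-logChar y N) : ℂ) • act N φ :=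
    (continuous_act N).fun_const_smul _
  refine hcont.closure_preimage_subset _ (closure_mono ?_ hφ)
  rintro _ ⟨M, hM, rfl⟩
  refine ⟨N * M, hN.mul hM, ?_⟩
  dsimp only
  rw [act_smul, smul_smul, act_mul, logChar_mul y hN hM, neg_add, Real.exp_add, Complex.ofReal_mul]

lemma exists_pos_le_normSq_of_weightDominated (hc : c ≠ 0) (hy : ∀ a, ∑ i, y a i = 1)
    (h : WeightDominated c y) : ∃ ε > 0, ∀ φ ∈ closure (normalizedOrbit y c), ε ≤ normSq φ := by
  obtain ⟨K, hK⟩ := h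
  refine ⟨Real.exp (-2 * K), Real.exp_pos _, fun φ hφ =>
    closure_minimal ?_ (isClosed_Ici.preimage continuous_normSq) hφ⟩
  rintro _ ⟨M, hM, rfl⟩
  have hle := hK M hM
  simp only [hy, Fin.sum_univ_three] at hle
  rw [Set.mem_preimage, Set.mem_Ici, normSq_exp_smul,
    ← Real.exp_log (normSq_pos (hM.act_ne_zero hc)), ← Real.exp_add, Real.exp_le_exp]
  linarith

lemma exists_isMinOn_normSq {S : Set Tensor} (hS : IsClosed S) (hne : S.Nonempty) :
    ∃ φ ∈ S, IsMinOn normSq S φ := by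
  obtain ⟨c, hc⟩ := hne
  refine continuous_normSq.continuousOn.exists_isMinOn' hS hc
    (Filter.Eventually.filter_mono inf_le_left ?_)
  have htendsto : Filter.Tendsto normSq (Filter.cocompact Tensor) Filter.atTop :=
    Filter.tendsto_atTop_mono sq_norm_le_normSq
      ((Filter.tendsto_pow_atTop two_ne_zero).comp (tendsto_norm_cocompact_atTop))
  exact htendsto.eventually_ge_atTop _

lemma exists_normSq_eq_one_of_weightDominated (hc : c ≠ 0) (hy : ∀ a, ∑ i, y a i = 1)
    (h : WeightDominated c y) :
    ∃ φ, normSq φ = 1 ∧ ∀ M, IsBorel M → Real.exp (2 * logChar y M) ≤ normSq (act M φ) := by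
  obtain ⟨ε, hε, hbound⟩ := exists_pos_le_normSq_of_weightDominated hc hy h
  obtain ⟨φ, hφ, hmin⟩ :=
    exists_isMinOn_normSq (S := closure (normalizedOrbit y c)) isClosed_closure
    ⟨_, subset_closure ⟨1, isBorel_one, rfl⟩⟩
  have hpos : 0 < normSq φ := hε.trans_le (hbound φ hφ)
  have hsmul (ψ : Tensor) : normSq (((√(normSq φ))⁻¹ : ℂ) • ψ) = normSq ψ / normSq φ := by
    rw [normSq_smul, norm_inv, Complex.norm_real, inv_pow, Real.norm_eq_abs, sq_abs,
      Real.sq_sqrt hpos.le, inv_mul_eq_div]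
  refine ⟨((√(normSq φ))⁻¹ : ℂ) • φ, (hsmul φ).trans (div_self hpos.ne'), fun M hM => ?_⟩
  have hle := isMinOn_iff.1 hmin _ (smul_act_mem_closure_normalizedOrbit hM hφ)
  rw [act_smul, hsmul, le_div_iff₀ hpos]
  rw [normSq_exp_smul, mul_neg, Real.exp_neg] at hle
  exact (le_inv_mul_iff₀ (Real.exp_pos _)).1 hle

theorem exists_hasDiagonalMarginals_of_weightDominated (hc : c ≠ 0) (hy : ∀ a, ∑ i, y a i = 1)
    (h : WeightDominated c y) :
    ∃ φ, normSq φ = 1 ∧ HasDiagonalMarginals φ y := by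
  obtain ⟨φ, hφ, hle⟩ := exists_normSq_eq_one_of_weightDominated hc hy h
  refine ⟨φ, hφ, fun a => ?_⟩
  suffices h : IsBorelMinimal (reduced φ a) (y a) from
    h.eq_diagonal (isHermitian_reduced a φ) (by rw [trace_reduced, hφ, Complex.ofReal_one])
  intro A hA hdiag
  rw [← logChar_mulSingle, ← reduced_act_mulSingle, trace_reduced, Complex.ofReal_re]
  exact hle _ (isBorel_mulSingle hA hdiag a)

end capacity

/-! ### Semi-invariants -/

/-- Continuous functions of a tensor which every invertible upper triangular matrix `A` acting on
party `a` multiplies by the product of the powers `A i i ^ w a i`. -/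
structure IsSemiInvariant (f : Tensor → ℂ) (w : Fin 3 → Fin 3 → ℕ) : Prop where
  continuous : Continuous f
  map_act : ∀ (a : Fin 3) (A : Matrix (Fin 3) (Fin 3) ℂ), A.IsUpperTriangular →
    (∀ i, A i i ≠ 0) → ∀ c, f (act (Pi.mulSingle a A) c) = (∏ i, A i i ^ w a i) * f c

namespace IsSemiInvariant

variable {f : Tensor → ℂ} {w : Fin 3 → Fin 3 → ℕ}

lemma map_act_of_isBorel (hf : IsSemiInvariant f w) {M : Fin 3 → Matrix (Fin 3) (Fin 3) ℂ}
    (hM : IsBorel M) (c : Tensor) : f (act M c) = (∏ a, ∏ i, M a i i ^ w a i) * f c := by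
  have hprod : M = Pi.mulSingle 0 (M 0) * (Pi.mulSingle 1 (M 1) * Pi.mulSingle 2 (M 2)) := by
    funext a; fin_cases a <;> simp
  conv_lhs => rw [hprod]
  simp only [act_mul, hf.map_act _ _ (hM _).1 (hM _).2,
    Fin.prod_univ_three (fun a => ∏ i, M a i i ^ w a i)]
  ring

lemma map_smul (hf : IsSemiInvariant f w) {z : ℂ} (hz : z ≠ 0) (c : Tensor) :
    f (z • c) = z ^ (∑ i, w 0 i) * f c := by
  have hact : act (Pi.mulSingle 0 (diagonal fun _ => z)) c = z • c := flatten_injective <| by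
    rw [flatten_act]; ext; simp [flatten]
  rw [← hact, hf.map_act 0 _ (blockTriangular_diagonal _) (by simpa)]
  simp [Finset.prod_pow_eq_pow_sum]

lemma norm_map_act (hf : IsSemiInvariant f w) {M : Fin 3 → Matrix (Fin 3) (Fin 3) ℂ}
    (hM : IsBorel M) (c : Tensor) :
    ‖f (act M c)‖ = Real.exp (logChar (fun a i => w a i) M) * ‖f c‖ := by
  have hlog (a i) : Real.exp (w a i * Real.log ‖M a i i‖) = ‖M a i i‖ ^ w a i := by
    rw [Real.exp_nat_mul, Real.exp_log (norm_pos_iff.2 ((hM a).2 i))]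
  simp only [hf.map_act_of_isBorel hM, logChar, Real.exp_sum, hlog, norm_mul, norm_prod, norm_pow]

lemma exists_norm_le (hf : IsSemiInvariant f w) :
    ∃ B, ∀ c ≠ 0, ‖f c‖ ≤ B * √(normSq c) ^ (∑ i, w 0 i) := by
  have hcompact : IsCompact {c : Tensor | normSq c = 1} := by
    refine Metric.isCompact_of_isClosed_isBounded (isClosed_singleton.preimage continuous_normSq)
      (isBounded_iff_forall_norm_le.2 ⟨1, fun c (hc : normSq c = 1) => ?_⟩)
    exact (sq_le_one_iff₀ (norm_nonneg c)).1 (hc ▸ sq_norm_le_normSq c)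
  obtain ⟨B, hB⟩ := hcompact.exists_bound_of_continuousOn hf.continuous.continuousOn
  refine ⟨B, fun c hc => ?_⟩
  have hpos := Real.sqrt_pos.2 (normSq_pos hc)
  have hunit : normSq (((√(normSq c))⁻¹ : ℂ) • c) = 1 := by
    rw [normSq_smul, norm_inv, Complex.norm_real, inv_pow, Real.norm_eq_abs, sq_abs,
      Real.sq_sqrt (normSq_pos hc).le, inv_mul_cancel₀ (normSq_pos hc).ne']
  have hle := hB _ hunit
  rwa [hf.map_smul (inv_ne_zero (by exact_mod_cast hpos.ne')), norm_mul, norm_pow, norm_inv,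
    Complex.norm_real, Real.norm_of_nonneg hpos.le, inv_pow, inv_mul_le_iff₀ (by positivity),
    mul_comm] at hle

theorem weightDominated (hf : IsSemiInvariant f w) (hw : ∀ a, ∑ i, w a i = ∑ i, w 0 i) {c : Tensor}
    (hc : c ≠ 0) (hfc : f c ≠ 0) : WeightDominated c fun a i => w a i := by
  obtain ⟨B, hB⟩ := hf.exists_norm_le
  refine ⟨Real.log B - Real.log ‖f c‖, fun M hM => ?_⟩
  have hfc' := norm_pos_iff.2 hfc
  have hle := hB _ (hM.act_ne_zero hc)
  rw [hf.norm_map_act hM] at hle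
  have hpos := normSq_pos (hM.act_ne_zero hc)
  have hsum : ∑ a, ∑ i, (w a i : ℝ) = 3 * (∑ i, w 0 i : ℕ) := by
    exact_mod_cast (Finset.sum_congr rfl fun a _ => hw a).trans (by simp)
  have hBpos : 0 < B :=
    pos_of_mul_pos_left ((mul_pos (Real.exp_pos _) hfc').trans_le hle) (by positivity)
  have hlog := Real.log_le_log (by positivity) hle
  rw [Real.log_mul (Real.exp_pos _).ne' hfc'.ne', Real.log_exp, Real.log_mul hBpos.ne'
    (by positivity), Real.log_pow, Real.log_sqrt hpos.le] at hlog
  rw [hsum]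
  linarith

end IsSemiInvariant

section slots

variable (A : Matrix (Fin 3) (Fin 3) ℂ) (c : Tensor)

lemma act_mulSingle_zero : act (Pi.mulSingle 0 A) c = fun i j => ∑ i', A i i' • c i' j := by
  ext i j k; simp [act, one_apply]

lemma act_mulSingle_one : act (Pi.mulSingle 1 A) c = fun i j => ∑ j', A j j' • c i j' := by
  ext i j k; simp [act, one_apply]

lemma act_mulSingle_two : act (Pi.mulSingle 2 A) c = fun i j => A *ᵥ c i j := by
  ext i j k; simp [act, one_apply, mulVec, dotProduct]

end slots

lemma IsSemiInvariant.of_slots {f : Tensor → ℂ} {w : Fin 3 → Fin 3 → ℕ} (hf : Continuous f)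
    (h : ∀ A : Matrix (Fin 3) (Fin 3) ℂ, A 1 0 = 0 → A 2 0 = 0 → A 2 1 = 0 → ∀ c,
      f (fun i j => ∑ i', A i i' • c i' j)
        = A 0 0 ^ w 0 0 * A 1 1 ^ w 0 1 * A 2 2 ^ w 0 2 * f c ∧
      f (fun i j => ∑ j', A j j' • c i j')
        = A 0 0 ^ w 1 0 * A 1 1 ^ w 1 1 * A 2 2 ^ w 1 2 * f c ∧
      f (fun i j => A *ᵥ c i j)
        = A 0 0 ^ w 2 0 * A 1 1 ^ w 2 1 * A 2 2 ^ w 2 2 * f c) : IsSemiInvariant f w where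
  continuous := hf
  map_act a A hA _ c := by
    obtain ⟨h0, h1, h2⟩ := h A (hA (by decide)) (hA (by decide)) (hA (by decide)) c
    fin_cases a
    · simpa [act_mulSingle_zero, Fin.prod_univ_three] using h0
    · simpa [act_mulSingle_one, Fin.prod_univ_three] using h1
    · simpa [act_mulSingle_two, Fin.prod_univ_three] using h2

lemma isSemiInvariant_001_001_001 : IsSemiInvariant (fun c => c 2 2 2) (generator 0) := by
  refine .of_slots (by fun_prop) fun A _ h20 h21 c => ⟨?_, ?_, ?_⟩ <;>
    simp [generator, mulVec, dotProduct, Fin.sum_univ_three, h20, h21]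

lemma isSemiInvariant_002_011_011 :
    IsSemiInvariant (fun c => c 2 1 1 * c 2 2 2 - c 2 1 2 * c 2 2 1) (generator 1) := by
  refine .of_slots (by fun_prop) fun A h10 h20 h21 c => ⟨?_, ?_, ?_⟩ <;>
    simp [generator, mulVec, dotProduct, Fin.sum_univ_three, h10, h20, h21] <;> ring

/-- Cayley's hyperdeterminant of the `2 × 2 × 2` block of indices `1` and `2`. -/
def hyperdet (c : Tensor) : ℂ :=
  (c 1 1 1 * c 2 2 2 - c 1 1 2 * c 2 2 1 - c 1 2 1 * c 2 1 2 + c 1 2 2 * c 2 1 1) ^ 2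
    - 4 * (c 1 1 1 * c 1 2 2 - c 1 1 2 * c 1 2 1) * (c 2 1 1 * c 2 2 2 - c 2 1 2 * c 2 2 1)

lemma isSemiInvariant_hyperdet : IsSemiInvariant hyperdet (generator 2) := by
  refine .of_slots (by unfold hyperdet; fun_prop) fun A h10 h20 h21 c => ⟨?_, ?_, ?_⟩ <;>
    simp [hyperdet, generator, mulVec, dotProduct, Fin.sum_univ_three, h10, h20, h21] <;> ring

local notation "⟦" u "," v "," w "⟧" => u ⬝ᵥ v ⨯₃ w

lemma triple_mulVec {A : Matrix (Fin 3) (Fin 3) ℂ} (u v w : Fin 3 → ℂ) :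
    ⟦A *ᵥ u, A *ᵥ v, A *ᵥ w⟧ = A.det * ⟦u, v, w⟧ := by
  simp only [triple_product_eq_det]
  have : ![A *ᵥ u, A *ᵥ v, A *ᵥ w] = of ![u, v, w] * Aᵀ := by
    ext i j
    fin_cases i <;> simp [mul_apply, mulVec, dotProduct, mul_comm]
  rw [this, det_mul, det_transpose, mul_comm]; rfl

lemma triple_eq (u v w : Fin 3 → ℂ) : ⟦u, v, w⟧ =
    u 0 * (v 1 * w 2 - v 2 * w 1) + u 1 * (v 2 * w 0 - v 0 * w 2)
      + u 2 * (v 0 * w 1 - v 1 * w 0) := by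
  simp [cross_apply, dotProduct, Fin.sum_univ_three]

@[fun_prop]
lemma continuous_triple {X : Type*} [TopologicalSpace X] {u v w : X → Fin 3 → ℂ}
    (hu : Continuous u) (hv : Continuous v) (hw : Continuous w) :
    Continuous fun x => ⟦u x, v x, w x⟧ := by
  simp only [triple_eq]; fun_prop

lemma isSemiInvariant_003_111_111 :
    IsSemiInvariant (fun c => ⟦c 2 0, c 2 1, c 2 2⟧) (generator 3) := by
  refine .of_slots (by fun_prop) fun A h10 h20 h21 c => ⟨?_, ?_, ?_⟩
  · simp [generator, Fin.sum_univ_three, h20, h21]; ring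
  · simp [generator, Fin.sum_univ_three, h10, h20, h21]; ring
  · simp [generator, triple_mulVec, det_fin_three, h10, h20, h21]

lemma isSemiInvariant_012_012_111 :
    IsSemiInvariant (fun c => ⟦c 2 2, c 2 1, c 1 2⟧) (generator 4) := by
  refine .of_slots (by fun_prop) fun A h10 h20 h21 c => ⟨?_, ?_, ?_⟩
  · simp [generator, Fin.sum_univ_three, h10, h20, h21]; ring
  · simp [generator, Fin.sum_univ_three, h10, h20, h21]; ring
  · simp [generator, triple_mulVec, det_fin_three, h10, h20, h21]

lemma isSemiInvariant_013_022_112 :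
    IsSemiInvariant (fun c => ⟦c 2 2, c 2 1, c 1 2⟧ * c 2 1 2 - ⟦c 2 2, c 2 1, c 1 1⟧ * c 2 2 2)
      (generator 6) := by
  refine .of_slots (by fun_prop) fun A h10 h20 h21 c => ⟨?_, ?_, ?_⟩
  · simp [generator, Fin.sum_univ_three, h10, h20, h21]; ring
  · simp [generator, Fin.sum_univ_three, h10, h20, h21]; ring
  · simp [generator, triple_mulVec, det_fin_three, h10, h20, h21];
    simp [mulVec, dotProduct, Fin.sum_univ_three, h20, h21]; ring

lemma isSemiInvariant_033_033_222 :
    IsSemiInvariant (fun c => ⟦c 1 1, c 2 2, c 2 1⟧ * ⟦c 1 1, c 1 2, c 2 2⟧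
        - ⟦c 2 1, c 1 2, c 2 2⟧ * ⟦c 1 1, c 1 2, c 2 1⟧) (generator 7) := by
  refine .of_slots (by fun_prop) fun A h10 h20 h21 c => ⟨?_, ?_, ?_⟩
  · simp [generator, Fin.sum_univ_three, h10, h20, h21]; ring
  · simp [generator, Fin.sum_univ_three, h10, h20, h21, triple_product_permutation (c 2 1)]; ring
  · simp [generator, triple_mulVec, det_fin_three, h10, h20, h21]; ring

lemma isSemiInvariant_033_114_222 :
    IsSemiInvariant (fun c => ⟦c 1 2, c 2 2, c 1 0⟧ * ⟦c 1 2, c 2 2, c 2 1⟧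
        - ⟦c 1 2, c 2 2, c 1 1⟧ * ⟦c 1 2, c 2 2, c 2 0⟧) (generator 9) := by
  refine .of_slots (by fun_prop) fun A h10 h20 h21 c => ⟨?_, ?_, ?_⟩
  · simp [generator, Fin.sum_univ_three, h10, h20, h21]; ring
  · simp [generator, Fin.sum_univ_three, h10, h20, h21]; ring
  · simp [generator, triple_mulVec, det_fin_three, h10, h20, h21]; ring

/-- The row `j` of the combination of the slices `c 1` and `c 2` whose last entry vanishes. -/
def pencilRow (c : Tensor) (j : Fin 3) : Fin 3 → ℂ := c 1 2 2 • c 2 j - c 2 2 2 • c 1 j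

lemma isSemiInvariant_033_114_114 :
    IsSemiInvariant (fun c => ⟦pencilRow c 0, pencilRow c 1, pencilRow c 2⟧) (generator 8) := by
  refine .of_slots (by unfold pencilRow; fun_prop) fun A h10 h20 h21 c => ⟨?_, ?_, ?_⟩
  · have hrow (j) : pencilRow (fun i j => ∑ i', A i i' • c i' j) j
        = (A 1 1 * A 2 2) • pencilRow c j := by
      ext k; simp [pencilRow, Fin.sum_univ_three, h10, h20, h21]; ring
    simp [generator, hrow]; ring
  · have hrow (j) : pencilRow (fun i j => ∑ j', A j j' • c i j') j
        = A 2 2 • ∑ j', A j j' • pencilRow c j' := by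
      ext k; simp [pencilRow, Fin.sum_univ_three, h20, h21]; ring
    simp only [hrow]
    simp [generator, Fin.sum_univ_three, h10, h20, h21]; ring
  · have hrow (j) : pencilRow (fun i j => A *ᵥ c i j) j = A 2 2 • (A *ᵥ pencilRow c j) := by
      simp only [pencilRow, mulVec_sub, mulVec_smul, smul_sub, smul_smul]
      simp [mulVec, dotProduct, Fin.sum_univ_three, h20, h21]
    simp [generator, triple_mulVec, det_fin_three, h10, h20, h21, hrow]; ring

/-- The binary cubic `det (x • c 1 + y • c 2)`, where `c 1` and `c 2` are slices of `c`. -/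
def pencilCubic (c : Tensor) : Cubic ℂ where
  a := ⟦c 1 0, c 1 1, c 1 2⟧
  b := ⟦c 1 0, c 1 1, c 2 2⟧ + ⟦c 1 0, c 2 1, c 1 2⟧ + ⟦c 2 0, c 1 1, c 1 2⟧
  c := ⟦c 2 0, c 2 1, c 1 2⟧ + ⟦c 2 0, c 1 1, c 2 2⟧ + ⟦c 1 0, c 2 1, c 2 2⟧
  d := ⟦c 2 0, c 2 1, c 2 2⟧

lemma discr_smul_coeffs {P Q : Cubic ℂ} {s : ℂ} (ha : Q.a = s * P.a) (hb : Q.b = s * P.b)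
    (hc : Q.c = s * P.c) (hd : Q.d = s * P.d) : Q.discr = s ^ 4 * P.discr := by
  simp only [Cubic.discr, ha, hb, hc, hd]; ring

lemma isSemiInvariant_discr_pencilCubic :
    IsSemiInvariant (fun c => (pencilCubic c).discr) (generator 10) := by
  refine .of_slots (by unfold pencilCubic Cubic.discr; fun_prop) fun A h10 h20 h21 c => ⟨?_, ?_, ?_⟩
  · simp [generator, Fin.sum_univ_three, h10, h20, h21, pencilCubic]
    simp only [Cubic.discr]; ring
  · have hscale : (pencilCubic fun i j => ∑ j', A j j' • c i j').discr
        = (A 0 0 * A 1 1 * A 2 2) ^ 4 * (pencilCubic c).discr := by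
      apply discr_smul_coeffs <;>
        simp [pencilCubic, triple_eq, Fin.sum_univ_three, h10, h20, h21] <;> ring
    simp [generator, hscale, mul_pow]
  · have hscale :
        (pencilCubic fun i j => A *ᵥ c i j).discr = A.det ^ 4 * (pencilCubic c).discr := by
      apply discr_smul_coeffs <;> simp [pencilCubic, triple_mulVec, mul_add]
    simp [generator, hscale, det_fin_three, h10, h20, h21, mul_pow]

/-- Strassen's `9 × 9` matrix: the block matrix of `u ↦ c ×₃ u`, where the slices `c i` of the
tensor play the role of the coordinates of a vector. -/
def strassenMatrix (c : Tensor) : Matrix (Fin 3 × Fin 3) (Fin 3 × Fin 3) ℂ :=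
  .of fun p q => ![![0, -c 2, c 1], ![c 2, 0, -c 0], ![-c 1, c 0, 0]] p.1 q.1 p.2 q.2

lemma strassenMatrix_act_zero (A : Matrix (Fin 3) (Fin 3) ℂ) (c : Tensor) :
    (A ⊗ₖ 1)ᵀ * strassenMatrix (act (Pi.mulSingle 0 A) c) * (A ⊗ₖ 1)
      = A.det • strassenMatrix c := by
  ext ⟨a, j⟩ ⟨b, k⟩
  fin_cases a <;> fin_cases b <;>
    simp [strassenMatrix, act_mulSingle_zero, mul_apply, Fintype.sum_prod_type,
      Fin.sum_univ_three, det_fin_three, one_apply] <;> ring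

lemma strassenMatrix_act_one (A : Matrix (Fin 3) (Fin 3) ℂ) (c : Tensor) :
    strassenMatrix (act (Pi.mulSingle 1 A) c) = (1 ⊗ₖ A) * strassenMatrix c := by
  ext ⟨a, j⟩ ⟨b, k⟩
  fin_cases a <;> fin_cases b <;>
    simp [strassenMatrix, act_mulSingle_one, mul_apply, Fintype.sum_prod_type, Fin.sum_univ_three,
      one_apply] <;> ring

lemma strassenMatrix_act_two (A : Matrix (Fin 3) (Fin 3) ℂ) (c : Tensor) :
    strassenMatrix (act (Pi.mulSingle 2 A) c) = strassenMatrix c * (1 ⊗ₖ A)ᵀ := by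
  ext ⟨a, j⟩ ⟨b, k⟩
  fin_cases a <;> fin_cases b <;>
    simp [strassenMatrix, act_mulSingle_two, mul_apply, Fintype.sum_prod_type, Fin.sum_univ_three,
      one_apply, mulVec, dotProduct] <;> ring

lemma isSemiInvariant_det_strassenMatrix :
    IsSemiInvariant (fun c => (strassenMatrix c).det) (generator 5) where
  continuous := by
    refine Continuous.matrix_det (continuous_matrix ?_)
    rintro ⟨a, j⟩ ⟨b, k⟩
    fin_cases a <;> fin_cases b <;> simp [strassenMatrix] <;> fun_prop
  map_act a A hA hdiag c := by
    have hprod : ∏ i, A i i ^ generator 5 a i = A.det ^ 3 := by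
      rw [det_of_isUpperTriangular hA, ← Finset.prod_pow]
      exact Finset.prod_congr rfl fun i _ => by fin_cases a <;> fin_cases i <;> rfl
    have hdet : A.det ≠ 0 := by
      rw [det_of_isUpperTriangular hA]
      exact Finset.prod_ne_zero_iff.2 fun i _ => hdiag i
    rw [hprod]
    fin_cases a
    · have h := congr_arg det (strassenMatrix_act_zero A c)
      simp only [det_mul, det_transpose, det_kronecker, det_smul, det_one, Fintype.card_prod,
        Fintype.card_fin, one_pow, mul_one] at h
      refine mul_left_cancel₀ (pow_ne_zero 6 hdet) ?_
      change A.det ^ 6 * (strassenMatrix (act (Pi.mulSingle 0 A) c)).det =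
        A.det ^ 6 * (A.det ^ 3 * (strassenMatrix c).det)
      linear_combination h
    · simp [strassenMatrix_act_one, det_kronecker]
    · simp [strassenMatrix_act_two, det_kronecker, mul_comm]

/-- A tensor on which none of the semi-invariants vanishes, and which the exchange of adjacent
parties changes only by a diagonal sign matrix on each factor. -/
def psi : Tensor := ![
  ![![0, 0, 0], ![0, 0, 1], ![0, -1, 0]],
  ![![0, 0, -1], ![0, 1, 1], ![1, 1, 0]],
  ![![0, 1, 0], ![-1, 1, 0], ![0, 0, 1]]]

lemma psi_ne_zero : psi ≠ 0 := fun h => by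
  simpa [psi] using congr_fun₃ h 2 2 2

lemma adjSwap_psi (s : Fin 2) : adjSwap s psi = act (fun _ => diagonal ![-1, 1, 1]) psi := by
  ext i j k
  fin_cases s <;> fin_cases i <;> fin_cases j <;> fin_cases k <;>
    simp [adjSwap, psi, act, diagonal]

lemma IsBorel.comp_perm {M : Fin 3 → Matrix (Fin 3) (Fin 3) ℂ} (hM : IsBorel M)
    (σ : Equiv.Perm (Fin 3)) : IsBorel (M ∘ σ) := fun a => hM (σ a)

lemma logChar_comp_perm (y : Weight) (M : Fin 3 → Matrix (Fin 3) (Fin 3) ℂ)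
    (σ : Equiv.Perm (Fin 3)) : logChar (y ∘ σ) (M ∘ σ) = logChar y M :=
  Equiv.sum_comp σ fun a => ∑ i, y a i * Real.log ‖M a i i‖

lemma WeightDominated.adjSwap {c : Tensor} {y : Weight} (h : WeightDominated c y) (s : Fin 2) :
    WeightDominated (adjSwap s c) (y ∘ Equiv.swap s.castSucc s.succ) := by
  obtain ⟨K, hK⟩ := h
  refine ⟨K, fun M hM => ?_⟩
  set τ := Equiv.swap s.castSucc s.succ
  have hττ : (M ∘ τ) ∘ τ = M := funext fun a => congr_arg M (Equiv.swap_apply_self ..)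
  have hle := hK (M ∘ τ) (hM.comp_perm τ)
  rw [← normSq_adjSwap s, adjSwap_act, ← logChar_comp_perm y (M ∘ τ) τ, hττ] at hle
  rwa [Function.comp_def, Equiv.sum_comp τ fun a => ∑ i, y a i]

lemma WeightDominated.of_act {c : Tensor} {y : Weight} {N : Fin 3 → Matrix (Fin 3) (Fin 3) ℂ}
    (hN : IsBorel N) (h : WeightDominated c y) : WeightDominated (act N c) y := by
  obtain ⟨K, hK⟩ := h
  refine ⟨K - logChar y N, fun M hM => ?_⟩
  have hle := hK (M * N) (hM.mul hN)
  rw [logChar_mul y hM hN, act_mul] at hle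
  linarith

lemma isBorel_sign : IsBorel fun _ => diagonal ![-1, 1, 1] := fun _ =>
  ⟨blockTriangular_diagonal _, fun i => by fin_cases i <;> simp⟩

lemma weightDominated_psi_comp_perm {y : Weight} (h : WeightDominated psi y)
    (σ : Equiv.Perm (Fin 3)) : WeightDominated psi (y ∘ σ) := by
  refine comp_perm_of_comp_swap (P := WeightDominated psi) (fun s y h => ?_) h σ
  have hinv : act (fun _ => diagonal ![-1, 1, 1]) (adjSwap s psi) = psi := by
    rw [adjSwap_psi, ← act_mul]
    convert act_one psi
    funext a
    ext i j
    fin_cases i <;> fin_cases j <;> simp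
  exact hinv ▸ (h.adjSwap s).of_act isBorel_sign

lemma det_strassenMatrix_psi_ne_zero : (strassenMatrix psi).det ≠ 0 := fun hdet => by
  obtain ⟨v, hv, hker⟩ := exists_mulVec_eq_zero_iff.2 hdet
  have hrow (i j) := congr_fun hker (i, j)
  simp only [strassenMatrix, psi, mulVec, dotProduct, Fintype.sum_prod_type, Fin.sum_univ_three,
    Fin.forall_fin_succ] at hrow
  simp at hrow
  exact hv (by ext ⟨i, j⟩; fin_cases i <;> fin_cases j <;> dsimp <;> grind)

lemma sum_generator_apply (j : Fin 11) (a : Fin 3) :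
    ∑ i, generator j a i = ∑ i, generator j 0 i := by
  revert j a; decide

lemma containsGenerators_dominatedCone_psi : ContainsGenerators (dominatedCone psi) where
  comp_perm hy σ := weightDominated_psi_comp_perm hy σ
  generator_mem j := by
    have hmem {f : Tensor → ℂ} (hf : IsSemiInvariant f (generator j)) (hpsi : f psi ≠ 0) :
        castWeight (generator j) ∈ dominatedCone psi :=
      hf.weightDominated (sum_generator_apply j) psi_ne_zero hpsi
    fin_cases j
    · exact hmem isSemiInvariant_001_001_001 (by simp [psi])
    · exact hmem isSemiInvariant_002_011_011 (by simp [psi])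
    · exact hmem isSemiInvariant_hyperdet (by simp only [hyperdet, psi, cons_val]; norm_num)
    · exact hmem isSemiInvariant_003_111_111 (by simp only [triple_eq, psi, cons_val]; norm_num)
    · exact hmem isSemiInvariant_012_012_111 (by simp only [triple_eq, psi, cons_val]; norm_num)
    · exact hmem isSemiInvariant_det_strassenMatrix det_strassenMatrix_psi_ne_zero
    · exact hmem isSemiInvariant_013_022_112 (by
        simp only [triple_eq, psi, cons_val]; norm_num)
    · exact hmem isSemiInvariant_033_033_222 (by simp only [triple_eq, psi, cons_val]; norm_num)
    · exact hmem isSemiInvariant_033_114_114 (by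
        simp only [pencilRow, triple_eq, psi, cons_val]; simp)
    · exact hmem isSemiInvariant_033_114_222 (by simp only [triple_eq, psi, cons_val]; norm_num)
    · exact hmem isSemiInvariant_discr_pencilCubic (by
        simp only [pencilCubic, Cubic.discr, triple_eq, psi, cons_val]; norm_num)

/-! ### Necessity of the inequalities -/

lemma HasDiagonalMarginals.sum_eq_normSq {c : Tensor} {l : Fin 3 → Fin 3 → ℝ}
    (h : HasDiagonalMarginals c l) (a : Fin 3) : ∑ i, l a i = normSq c := by
  have htrace := trace_reduced a c
  rw [h a, trace_diagonal] at htrace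
  exact_mod_cast htrace

lemma HasDiagonalMarginals.adjSwap {c : Tensor} {l : Fin 3 → Fin 3 → ℝ}
    (h : HasDiagonalMarginals c l) (s : Fin 2) :
    HasDiagonalMarginals (adjSwap s c) (l ∘ Equiv.swap s.castSucc s.succ) := fun a => by
  rw [reduced_adjSwap]
  exact h _

lemma reduced_act_zero_of_unitary {M : Fin 3 → Matrix (Fin 3) (Fin 3) ℂ}
    (hM : ∀ a, M a ∈ unitaryGroup (Fin 3) ℂ) (c : Tensor) :
    reduced (act M c) 0 = M 0 * reduced c 0 * (M 0)ᴴ := by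
  have hK : (M 1 ⊗ₖ M 2)ᵀ * ((M 1 ⊗ₖ M 2)ᵀ)ᴴ = 1 := mem_unitaryGroup_iff.1 <|
    transpose_mem_unitaryGroup_iff.2 (kronecker_mem_unitary (hM 1) (hM 2))
  rw [reduced_zero_eq_mul, reduced_zero_eq_mul, flatten_act, conjTranspose_mul,
    Matrix.mul_assoc, ← Matrix.mul_assoc _ _ (_ᴴ), hK]
  simp only [conjTranspose_mul, Matrix.one_mul, Matrix.mul_assoc]

lemma reduced_act_of_unitary (a : Fin 3) (c : Tensor) {M : Fin 3 → Matrix (Fin 3) (Fin 3) ℂ}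
    (hM : ∀ a, M a ∈ unitaryGroup (Fin 3) ℂ) :
    reduced (act M c) a = M a * reduced c a * (M a)ᴴ := by
  induction a, c using forall_party generalizing M with
  | hP c => exact reduced_act_zero_of_unitary hM c
  | hswap s a c h =>
    simpa [← adjSwap_act, reduced_adjSwap] using
      h (M := M ∘ Equiv.swap s.castSucc s.succ) fun b => hM _

lemma normSq_act_of_unitary (c : Tensor) {M : Fin 3 → Matrix (Fin 3) (Fin 3) ℂ}
    (hM : ∀ a, M a ∈ unitaryGroup (Fin 3) ℂ) : normSq (act M c) = normSq c := by
  have htrace := trace_reduced 0 (act M c)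
  rw [reduced_act_of_unitary 0 c hM, trace_mul_comm, ← Matrix.mul_assoc,
    ← star_eq_conjTranspose, mem_unitaryGroup_iff'.1 (hM 0), Matrix.one_mul,
    trace_reduced] at htrace
  exact_mod_cast htrace.symm

lemma re_reduced_apply_self (d : Tensor) :
    (fun a i => (reduced d a i i).re) = ![fun i => ∑ j, ∑ k, ‖d i j k‖ ^ 2,
      fun j => ∑ i, ∑ k, ‖d i j k‖ ^ 2, fun k => ∑ i, ∑ j, ‖d i j k‖ ^ 2] := by
  funext a i
  fin_cases a <;> simp [reduced, rho1, rho2, rho3, Complex.mul_conj', ← Complex.ofReal_pow]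

lemma sum_mul_reduced_le {d : Tensor} {t : Fin 3 → Fin 3 → ℝ} {r : ℝ}
    (h : ∀ i j k, d i j k ≠ 0 → t 0 i + t 1 j + t 2 k ≤ r) :
    ∑ a, ∑ i, t a i * (reduced d a i i).re ≤ r * normSq d := by
  have hentry (i j k) : (t 0 i + t 1 j + t 2 k) * ‖d i j k‖ ^ 2 ≤ r * ‖d i j k‖ ^ 2 := by
    rcases eq_or_ne (d i j k) 0 with h0 | h0
    · simp [h0]
    · exact mul_le_mul_of_nonneg_right (h i j k h0) (by positivity)
  calc ∑ a, ∑ i, t a i * (reduced d a i i).re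
      = ∑ i, ∑ j, ∑ k, (t 0 i + t 1 j + t 2 k) * ‖d i j k‖ ^ 2 := by
        simp only [congr_fun₂ (re_reduced_apply_self d)]
        simp [Fin.sum_univ_three]
        ring
    _ ≤ ∑ i, ∑ j, ∑ k, r * ‖d i j k‖ ^ 2 :=
        Finset.sum_le_sum fun i _ => Finset.sum_le_sum fun j _ => Finset.sum_le_sum fun k _ =>
          hentry i j k
    _ = r * normSq d := by simp only [normSq, Finset.mul_sum]

local notation "𝓗" => EuclideanSpace ℂ (Fin 3)

/-- The complex trilinear form with coefficients `c`. -/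
noncomputable def triForm (c : Tensor) : 𝓗 →ₗ[ℂ] 𝓗 →ₗ[ℂ] 𝓗 →ₗ[ℂ] ℂ :=
  ∑ i, (EuclideanSpace.projₗ i).smulRight
    (∑ j, (EuclideanSpace.projₗ j).smulRight (∑ k, c i j k • EuclideanSpace.projₗ k))

/-- The expectation of the observable `diagonal l` in the state `x`. -/
noncomputable def expectation (l : Fin 3 → ℝ) (x : 𝓗) : ℝ := ∑ i, ‖x i‖ ^ 2 * l i

lemma expectation_single (l : Fin 3 → ℝ) (i : Fin 3) :
    expectation l (EuclideanSpace.single i 1) = l i := by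
  simp [expectation, apply_ite]

lemma sum_sq_norm_eq_one {x : 𝓗} (hx : ‖x‖ = 1) : ∑ i, ‖x i‖ ^ 2 = 1 := by
  rw [← EuclideanSpace.norm_sq_eq, hx, one_pow]

lemma le_expectation {l : Fin 3 → ℝ} {x : 𝓗} {r : ℝ} (hx : ‖x‖ = 1)
    (h : ∀ i, x i ≠ 0 → r ≤ l i) : r ≤ expectation l x := by
  rw [← one_mul r, ← sum_sq_norm_eq_one hx, Finset.sum_mul]
  refine Finset.sum_le_sum fun i _ => ?_
  rcases eq_or_ne (x i) 0 with h0 | h0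
  · simp [h0]
  · exact mul_le_mul_of_nonneg_left (h i h0) (by positivity)

lemma expectation_le {l : Fin 3 → ℝ} {x : 𝓗} {r : ℝ} (hx : ‖x‖ = 1)
    (h : ∀ i, x i ≠ 0 → l i ≤ r) : expectation l x ≤ r := by
  have hneg := le_expectation (l := -l) hx fun i hi => neg_le_neg (h i hi)
  simp only [expectation, Pi.neg_apply, mul_neg, Finset.sum_neg_distrib] at hneg
  exact neg_le_neg_iff.1 hneg

lemma exists_unit_map_eq_zero {V W : Type*} [NormedAddCommGroup V] [NormedSpace ℂ V]
    [FiniteDimensional ℂ V] [AddCommGroup W] [Module ℂ W] [FiniteDimensional ℂ W]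
    (f : V →ₗ[ℂ] W) (h : Module.finrank ℂ W < Module.finrank ℂ V) :
    ∃ x, ‖x‖ = 1 ∧ f x = 0 := by
  obtain ⟨x, hx, hx0⟩ :=
    Submodule.exists_mem_ne_zero_of_ne_bot (LinearMap.ker_ne_bot_of_finrank_lt h)
  refine ⟨(‖x‖⁻¹ : ℂ) • x, ?_, by rw [map_smul, LinearMap.mem_ker.1 hx, smul_zero]⟩
  exact_mod_cast norm_smul_inv_norm (𝕜 := ℂ) hx0

lemma exists_unit_common_zero (f g : 𝓗 →ₗ[ℂ] ℂ) : ∃ x, ‖x‖ = 1 ∧ f x = 0 ∧ g x = 0 := by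
  obtain ⟨x, hx, hfg⟩ := exists_unit_map_eq_zero (f.prod g) (by simp)
  exact ⟨x, hx, Prod.ext_iff.1 hfg⟩

lemma exists_unit_orthogonal_ker_le {f : 𝓗 →ₗ[ℂ] ℂ} {p q : 𝓗} (hp : f p = 0) (hq : f q = 0) :
    ∃ n : 𝓗, ‖n‖ = 1 ∧ inner ℂ n p = 0 ∧ inner ℂ n q = 0 ∧ ∀ x, inner ℂ n x = 0 → f x = 0 := by
  obtain ⟨v, hv⟩ := (InnerProductSpace.toDual ℂ 𝓗).surjective f.toContinuousLinearMap
  have hfv (x : 𝓗) : f x = inner ℂ v x := (DFunLike.congr_fun hv x).symm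
  rcases eq_or_ne v 0 with rfl | hv0
  · obtain ⟨n, hn, hnp, hnq⟩ := exists_unit_common_zero (innerₛₗ ℂ p) (innerₛₗ ℂ q)
    exact ⟨n, hn, inner_eq_zero_symm.1 hnp, inner_eq_zero_symm.1 hnq, fun x _ => by simp [hfv]⟩
  · have : (‖v‖⁻¹ : ℂ) ≠ 0 := by simpa
    refine ⟨(‖v‖⁻¹ : ℂ) • v, by exact_mod_cast norm_smul_inv_norm (𝕜 := ℂ) hv0, ?_, ?_, ?_⟩ <;>
      simp_all

lemma exists_orthonormalBasis_apply_eq {u : 𝓗} (hu : ‖u‖ = 1) (i : Fin 3) :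
    ∃ b : OrthonormalBasis (Fin 3) ℂ 𝓗, b i = u := by
  obtain ⟨b, hb⟩ := Orthonormal.exists_orthonormalBasis_extension_of_card_eq (𝕜 := ℂ)
    (v := fun _ : Fin 3 => u) (s := {i}) (by simp) (by
      rw [orthonormal_subsingleton_iff]; exact fun _ => hu)
  exact ⟨b, hb i rfl⟩

lemma exists_orthonormalBasis_apply_eq_apply_eq {u v : 𝓗} (hu : ‖u‖ = 1) (hv : ‖v‖ = 1)
    (huv : inner ℂ u v = 0) {i j : Fin 3} (hij : i ≠ j) :
    ∃ b : OrthonormalBasis (Fin 3) ℂ 𝓗, b i = u ∧ b j = v := by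
  obtain ⟨b, hb⟩ := Orthonormal.exists_orthonormalBasis_extension_of_card_eq (𝕜 := ℂ)
    (v := fun k : Fin 3 => if k = i then u else v) (s := {i, j}) (by simp) (by
      rw [orthonormal_iff_ite]
      rintro ⟨k, rfl | rfl⟩ ⟨m, rfl | rfl⟩ <;>
        simp [Subtype.ext_iff, hij, hij.symm, huv, inner_eq_zero_symm.1 huv,
          inner_self_eq_norm_sq_to_K, hu, hv])
  exact ⟨b, by simpa using hb i, by simpa [hij.symm] using hb j⟩

lemma exists_orthonormalBasis_flag {u : 𝓗} (hu : ‖u‖ = 1) (f : 𝓗 →ₗ[ℂ] ℂ) :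
    ∃ b : OrthonormalBasis (Fin 3) ℂ 𝓗, b 0 = u ∧ f (b 1) = 0 := by
  obtain ⟨v, hv, hfv, huv⟩ := exists_unit_common_zero f (innerₛₗ ℂ u)
  obtain ⟨b, hb0, hb1⟩ := exists_orthonormalBasis_apply_eq_apply_eq hu hv huv zero_ne_one
  exact ⟨b, hb0, hb1 ▸ hfv⟩

lemma apply_eq_zero_of_apply_eq_single {b : OrthonormalBasis (Fin 3) ℂ 𝓗} {i j k : Fin 3}
    (hi : b i = EuclideanSpace.single k 1) (hij : i ≠ j) : b j k = 0 := by
  simpa [hi, EuclideanSpace.inner_single_left] using b.orthonormal.2 hij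

/-- The matrices whose rows are the given orthonormal bases. -/
noncomputable def basisChange (b : Fin 3 → OrthonormalBasis (Fin 3) ℂ 𝓗) :
    Fin 3 → Matrix (Fin 3) (Fin 3) ℂ := fun a => .of fun i => b a i

lemma basisChange_mem_unitaryGroup (b : Fin 3 → OrthonormalBasis (Fin 3) ℂ 𝓗) (a : Fin 3) :
    basisChange b a ∈ unitaryGroup (Fin 3) ℂ := by
  rw [mem_unitaryGroup_iff]
  ext i j
  have horth := orthonormal_iff_ite.1 (b a).orthonormal j i
  simpa [basisChange, mul_apply, PiLp.inner_apply, one_apply, eq_comm] using horth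

lemma act_basisChange (b : Fin 3 → OrthonormalBasis (Fin 3) ℂ 𝓗) (c : Tensor) (i j k : Fin 3) :
    act (basisChange b) c i j k = triForm c (b 0 i) (b 1 j) (b 2 k) := by
  simp only [act, basisChange, of_apply, triForm, LinearMap.sum_apply, LinearMap.smulRight_apply,
    LinearMap.smul_apply, PiLp.projₗ_apply, EuclideanSpace.projₗ, smul_eq_mul, Finset.mul_sum]
  exact Finset.sum_congr rfl fun _ _ => Finset.sum_congr rfl fun _ _ =>
    Finset.sum_congr rfl fun _ _ => by ring

lemma HasDiagonalMarginals.reduced_act_basisChange {c : Tensor} {l : Fin 3 → Fin 3 → ℝ}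
    (h : HasDiagonalMarginals c l) (b : Fin 3 → OrthonormalBasis (Fin 3) ℂ 𝓗) (a i : Fin 3) :
    (reduced (act (basisChange b) c) a i i).re = expectation (l a) (b a i) := by
  rw [reduced_act_of_unitary a c (basisChange_mem_unitaryGroup b), h a]
  rw [mul_apply, Complex.re_sum]
  refine Finset.sum_congr rfl fun j _ => ?_
  rw [mul_diagonal, conjTranspose_apply, mul_right_comm, RCLike.star_def, Complex.mul_conj']
  simp only [basisChange, of_apply]
  exact_mod_cast Complex.ofReal_re _

lemma HasDiagonalMarginals.sum_mul_expectation_le {c : Tensor} {l : Fin 3 → Fin 3 → ℝ}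
    (hc : HasDiagonalMarginals c l) (b : Fin 3 → OrthonormalBasis (Fin 3) ℂ 𝓗)
    {t : Fin 3 → Fin 3 → ℝ} {r : ℝ}
    (h : ∀ i j k, triForm c (b 0 i) (b 1 j) (b 2 k) ≠ 0 → t 0 i + t 1 j + t 2 k ≤ r) :
    ∑ a, ∑ i, t a i * expectation (l a) (b a i) ≤ r * normSq c := by
  rw [← normSq_act_of_unitary c (basisChange_mem_unitaryGroup b)]
  simpa only [hc.reduced_act_basisChange, act_basisChange] using
    sum_mul_reduced_le (d := act (basisChange b) c) (t := t) (r := r)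
      fun i j k => by rw [act_basisChange]; exact h i j k

local notation "δ" i => EuclideanSpace.single i (1 : ℂ)

lemma apply_zero_le_expectation {l : Fin 3 → ℝ} {x : 𝓗} (hl : Monotone l) (hx : ‖x‖ = 1) :
    l 0 ≤ expectation l x :=
  le_expectation hx fun i _ => hl (Fin.zero_le i)

lemma apply_one_le_expectation {l : Fin 3 → ℝ} {x : 𝓗} (hl : Monotone l) (hx : ‖x‖ = 1)
    (h : x 0 = 0) : l 1 ≤ expectation l x :=
  le_expectation hx fun _ hi => hl (Fin.one_le_of_ne_zero fun h0 => hi (h0 ▸ h))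

lemma expectation_le_apply_one {l : Fin 3 → ℝ} {x : 𝓗} (hl : Monotone l) (hx : ‖x‖ = 1)
    (h : x 2 = 0) : expectation l x ≤ l 1 :=
  expectation_le hx fun i hi => hl (by
    have hi2 : i ≠ 2 := fun h2 => hi (h2 ▸ h)
    lia)

lemma expectation_le_apply_two {l : Fin 3 → ℝ} {x : 𝓗} (hl : Monotone l) (hx : ‖x‖ = 1) :
    expectation l x ≤ l 2 :=
  expectation_le hx fun i _ => hl (Fin.le_last i)

lemma map_eq_zero_of_apply_zero_eq_zero {f : 𝓗 →ₗ[ℂ] ℂ} (h1 : f (δ 1) = 0) (h2 : f (δ 2) = 0)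
    {x : 𝓗} (hx : x 0 = 0) : f x = 0 := by
  have hsum := (EuclideanSpace.basisFun (Fin 3) ℂ).sum_repr x
  simp only [EuclideanSpace.basisFun_apply, EuclideanSpace.basisFun_repr, Fin.sum_univ_three,
    hx, zero_smul, zero_add] at hsum
  rw [← hsum, map_add, map_smul, map_smul, h1, h2, smul_zero, smul_zero, add_zero]

/-- The standard basis in reverse order, starting with the largest level. -/
noncomputable def revBasis : OrthonormalBasis (Fin 3) ℂ 𝓗 :=
  (EuclideanSpace.basisFun (Fin 3) ℂ).reindex Fin.revPerm

lemma revBasis_eq : ⇑revBasis = ![δ 2, δ 1, δ 0] := by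
  ext1 i
  fin_cases i <;> simp [revBasis]

section Necessity

variable {c : Tensor} {l : Fin 3 → Fin 3 → ℝ}

lemma HasDiagonalMarginals.expectation_sub_le (hc : HasDiagonalMarginals c l)
    (b₀ b₁ b₂ : OrthonormalBasis (Fin 3) ℂ 𝓗)
    (h000 : triForm c (b₀ 0) (b₁ 0) (b₂ 0) = 0) (h100 : triForm c (b₀ 1) (b₁ 0) (b₂ 0) = 0)
    (h010 : triForm c (b₀ 0) (b₁ 1) (b₂ 0) = 0) (h001 : triForm c (b₀ 0) (b₁ 0) (b₂ 1) = 0) :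
    (expectation (l 0) (b₀ 0) - expectation (l 0) (b₀ 2)) +
      (expectation (l 1) (b₁ 0) - expectation (l 1) (b₁ 2)) +
      (expectation (l 2) (b₂ 0) - expectation (l 2) (b₂ 2)) ≤ normSq c := by
  have hle := hc.sum_mul_expectation_le ![b₀, b₁, b₂] (t := fun _ => ![1, 0, -1]) (r := 1)
    fun i j k h => by
      fin_cases i <;> fin_cases j <;> fin_cases k <;> first | exact absurd ‹_› h | norm_num
  simp only [Fin.sum_univ_three, cons_val] at hle
  linarith

lemma HasDiagonalMarginals.expectation_add_le (hc : HasDiagonalMarginals c l)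
    (b₀ b₁ b₂ : OrthonormalBasis (Fin 3) ℂ 𝓗)
    (h000 : triForm c (b₀ 0) (b₁ 0) (b₂ 0) = 0) (h100 : triForm c (b₀ 1) (b₁ 0) (b₂ 0) = 0) :
    expectation (l 1) (b₁ 0) + expectation (l 2) (b₂ 0)
      ≤ expectation (l 0) (b₀ 2) + normSq c := by
  have hle := hc.sum_mul_expectation_le ![b₀, b₁, b₂] (r := 1)
    (t := ![![0, 0, -1], ![1, 0, 0], ![1, 0, 0]]) fun i j k h => by
      fin_cases i <;> fin_cases j <;> fin_cases k <;> first
        | exact absurd ‹_› h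
        | simp only [cons_val]; norm_num
  simp only [Fin.sum_univ_three, cons_val] at hle
  linarith

/- The digits in the names below are eigenvalue indices: `level_jk_le_i` compares `l 1 j + l 2 k`
with `l 0 i`, and `gap_pq_rs_tu_le` bounds the sum of `l 0 p - l 0 q`, `l 1 r - l 1 s` and
`l 2 t - l 2 u`. -/

lemma HasDiagonalMarginals.level_22_le_2 (hc : HasDiagonalMarginals c l)
    (hl : ∀ a, Monotone (l a)) : l 1 2 + l 2 2 ≤ l 0 2 + normSq c := by
  obtain ⟨u, hu, hu0⟩ :=
    exists_unit_map_eq_zero (((triForm c).flip (δ 2)).flip (δ 2)) (by simp)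
  obtain ⟨b₀, rfl, hb⟩ := exists_orthonormalBasis_flag hu (((triForm c).flip (δ 2)).flip (δ 2))
  have hle := hc.expectation_add_le b₀ revBasis revBasis
    (by simpa [revBasis_eq] using hu0) (by simpa [revBasis_eq] using hb)
  simp only [revBasis_eq, cons_val, expectation_single] at hle
  linarith [expectation_le_apply_two (hl 0) (b₀.norm_eq_one 2)]

lemma HasDiagonalMarginals.level_21_le_1 (hc : HasDiagonalMarginals c l)
    (hl : ∀ a, Monotone (l a)) : l 1 2 + l 2 1 ≤ l 0 1 + normSq c := by
  obtain ⟨p, hp, hpc, hp0⟩ :=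
    exists_unit_common_zero (triForm c (δ 2) (δ 2)) (EuclideanSpace.projₗ 0)
  obtain ⟨n, hn, hn2, -, hker⟩ := exists_unit_orthogonal_ker_le
    (f := ((triForm c).flip (δ 2)).flip p) (p := δ 2) (q := δ 2) hpc hpc
  obtain ⟨b₀, rfl⟩ := exists_orthonormalBasis_apply_eq hn 2
  obtain ⟨b₂, rfl⟩ := exists_orthonormalBasis_apply_eq hp 0
  have hker' (i : Fin 3) (hi : 2 ≠ i) :
      triForm c (b₀ i) (revBasis 0) (b₂ 0) = 0 := by
    simpa [revBasis_eq] using hker _ (b₀.orthonormal.2 hi)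
  have hle := hc.expectation_add_le b₀ revBasis b₂ (hker' 0 (by decide)) (hker' 1 (by decide))
  simp only [revBasis_eq, cons_val, expectation_single] at hle
  linarith [expectation_le_apply_one (hl 0) hn
      (by simpa [EuclideanSpace.inner_single_right] using hn2),
    apply_one_le_expectation (hl 2) hp hp0]

lemma HasDiagonalMarginals.level_20_le_0 (hc : HasDiagonalMarginals c l)
    (hl : ∀ a, Monotone (l a)) : l 1 2 + l 2 0 ≤ l 0 0 + normSq c := by
  obtain ⟨p, hp, hp2, hp1⟩ :=
    exists_unit_common_zero (triForm c (δ 2) (δ 2)) (triForm c (δ 1) (δ 2))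
  obtain ⟨b₂, rfl⟩ := exists_orthonormalBasis_apply_eq hp 0
  have hle := hc.expectation_add_le revBasis revBasis b₂
    (by simpa [revBasis_eq] using hp2) (by simpa [revBasis_eq] using hp1)
  simp only [revBasis_eq, cons_val, expectation_single] at hle
  linarith [apply_zero_le_expectation (hl 2) hp]

lemma HasDiagonalMarginals.gap_12_21_21_le (hc : HasDiagonalMarginals c l)
    (hl : ∀ a, Monotone (l a)) :
    (l 0 1 - l 0 2) + (l 1 2 - l 1 1) + (l 2 2 - l 2 1) ≤ normSq c := by
  obtain ⟨u, hu, huc, hu0⟩ :=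
    exists_unit_common_zero (((triForm c).flip (δ 2)).flip (δ 2)) (EuclideanSpace.projₗ 0)
  obtain ⟨b₀, rfl, hb₀⟩ := exists_orthonormalBasis_flag hu (((triForm c).flip (δ 2)).flip (δ 2))
  obtain ⟨b₁, hb₁, hb₁c⟩ :=
    exists_orthonormalBasis_flag (u := δ 2) (by simp) ((triForm c (b₀ 0)).flip (δ 2))
  obtain ⟨b₂, hb₂, hb₂c⟩ :=
    exists_orthonormalBasis_flag (u := δ 2) (by simp) (triForm c (b₀ 0) (δ 2))
  have hle := hc.expectation_sub_le b₀ b₁ b₂ (by simpa [hb₁, hb₂] using huc)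
    (by simpa [hb₁, hb₂] using hb₀) (by simpa [hb₂] using hb₁c) (by simpa [hb₁] using hb₂c)
  rw [hb₁, hb₂, expectation_single, expectation_single] at hle
  linarith [apply_one_le_expectation (hl 0) hu hu0,
    expectation_le_apply_two (hl 0) (b₀.norm_eq_one 2),
    expectation_le_apply_one (hl 1) (b₁.norm_eq_one 2)
      (apply_eq_zero_of_apply_eq_single hb₁ (by decide)),
    expectation_le_apply_one (hl 2) (b₂.norm_eq_one 2)
      (apply_eq_zero_of_apply_eq_single hb₂ (by decide))]

lemma HasDiagonalMarginals.gap_02_21_20_le (hc : HasDiagonalMarginals c l)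
    (hl : ∀ a, Monotone (l a)) :
    (l 0 0 - l 0 2) + (l 1 2 - l 1 1) + (l 2 2 - l 2 0) ≤ normSq c := by
  obtain ⟨u, hu, hu2, hu1⟩ := exists_unit_common_zero (((triForm c).flip (δ 2)).flip (δ 2))
    (((triForm c).flip (δ 2)).flip (δ 1))
  obtain ⟨b₀, rfl, hb₀⟩ := exists_orthonormalBasis_flag hu (((triForm c).flip (δ 2)).flip (δ 2))
  obtain ⟨b₁, hb₁, hb₁c⟩ :=
    exists_orthonormalBasis_flag (u := δ 2) (by simp) ((triForm c (b₀ 0)).flip (δ 2))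
  have hle := hc.expectation_sub_le b₀ b₁ revBasis (by simpa [hb₁, revBasis_eq] using hu2)
    (by simpa [hb₁, revBasis_eq] using hb₀) (by simpa [revBasis_eq] using hb₁c)
    (by simpa [hb₁, revBasis_eq] using hu1)
  simp only [hb₁, revBasis_eq, cons_val, expectation_single] at hle
  linarith [apply_zero_le_expectation (hl 0) hu,
    expectation_le_apply_two (hl 0) (b₀.norm_eq_one 2),
    expectation_le_apply_one (hl 1) (b₁.norm_eq_one 2)
      (apply_eq_zero_of_apply_eq_single hb₁ (by decide))]

lemma exists_unit_triForm_eq_zero (c : Tensor) :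
    ∃ w : 𝓗, ‖w‖ = 1 ∧ ∀ x : 𝓗, x 0 = 0 → triForm c x (δ 2) w = 0 := by
  obtain ⟨w, hw, hw1, hw2⟩ :=
    exists_unit_common_zero (triForm c (δ 1) (δ 2)) (triForm c (δ 2) (δ 2))
  exact ⟨w, hw, fun x hx => map_eq_zero_of_apply_zero_eq_zero
    (f := ((triForm c).flip (δ 2)).flip w) hw1 hw2 hx⟩

lemma exists_orthonormalBasis_apply_two_eq_single {u : 𝓗} (hu : ‖u‖ = 1) (hu0 : u 0 = 0) :
    ∃ b : OrthonormalBasis (Fin 3) ℂ 𝓗, b 0 = u ∧ b 2 = δ 0 :=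
  exists_orthonormalBasis_apply_eq_apply_eq hu (by simp)
    (by simpa [EuclideanSpace.inner_single_right] using hu0) (by decide)

lemma HasDiagonalMarginals.gap_10_21_01_le (hc : HasDiagonalMarginals c l)
    (hl : ∀ a, Monotone (l a)) :
    (l 0 1 - l 0 0) + (l 1 2 - l 1 1) + (l 2 0 - l 2 1) ≤ normSq c := by
  obtain ⟨w, hw, hwc⟩ := exists_unit_triForm_eq_zero c
  obtain ⟨u, hu, huc, hu0⟩ :=
    exists_unit_common_zero (((triForm c).flip (δ 2)).flip (δ 2)) (EuclideanSpace.projₗ 0)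
  obtain ⟨b₀, rfl, hb₀⟩ := exists_orthonormalBasis_apply_two_eq_single hu hu0
  obtain ⟨r, hr, hrw, hr2, hker⟩ := exists_unit_orthogonal_ker_le
    (f := triForm c (b₀ 0) (δ 2)) (hwc _ hu0) huc
  obtain ⟨b₂, rfl, rfl⟩ := exists_orthonormalBasis_apply_eq_apply_eq hw hr
    (inner_eq_zero_symm.1 hrw) (i := 0) (j := 2) (by decide)
  obtain ⟨b₁, hb₁, hb₁c⟩ :=
    exists_orthonormalBasis_flag (u := δ 2) (by simp) ((triForm c (b₀ 0)).flip (b₂ 0))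
  have hb₀1 : b₀ 1 0 = 0 := apply_eq_zero_of_apply_eq_single hb₀ (by decide)
  have hle := hc.expectation_sub_le b₀ b₁ b₂ (hb₁ ▸ hwc _ hu0) (hb₁ ▸ hwc _ hb₀1) hb₁c
    (hb₁ ▸ hker _ (b₂.orthonormal.2 (by decide)))
  rw [hb₀, hb₁, expectation_single, expectation_single] at hle
  linarith [apply_one_le_expectation (hl 0) hu hu0, apply_zero_le_expectation (hl 2) hw,
    expectation_le_apply_one (hl 1) (b₁.norm_eq_one 2)
      (apply_eq_zero_of_apply_eq_single hb₁ (by decide)),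
    expectation_le_apply_one (hl 2) hr
      (by simpa [EuclideanSpace.inner_single_right] using hr2)]

lemma HasDiagonalMarginals.gap_10_20_02_le (hc : HasDiagonalMarginals c l)
    (hl : ∀ a, Monotone (l a)) :
    (l 0 1 - l 0 0) + (l 1 2 - l 1 0) + (l 2 0 - l 2 2) ≤ normSq c := by
  obtain ⟨w, hw, hwc⟩ := exists_unit_triForm_eq_zero c
  obtain ⟨u, hu, huc, hu0⟩ :=
    exists_unit_common_zero (((triForm c).flip (δ 1)).flip w) (EuclideanSpace.projₗ 0)
  obtain ⟨b₀, rfl, hb₀⟩ := exists_orthonormalBasis_apply_two_eq_single hu hu0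
  obtain ⟨b₂, rfl, hb₂⟩ := exists_orthonormalBasis_flag hw (triForm c (b₀ 0) (δ 2))
  have hb₀1 : b₀ 1 0 = 0 := apply_eq_zero_of_apply_eq_single hb₀ (by decide)
  have hle := hc.expectation_sub_le b₀ revBasis b₂ (by simpa [revBasis_eq] using hwc _ hu0)
    (by simpa [revBasis_eq] using hwc _ hb₀1) (by simpa [revBasis_eq] using huc)
    (by simpa [revBasis_eq] using hb₂)
  simp only [hb₀, revBasis_eq, cons_val, expectation_single] at hle
  linarith [apply_one_le_expectation (hl 0) hu hu0, apply_zero_le_expectation (hl 2) hw,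
    expectation_le_apply_two (hl 2) (b₂.norm_eq_one 2)]

end Necessity

/-! ### Ordered spectra -/

lemma comp_sort_eq_of_map_eq {n : ℕ} {α : Type*} [LinearOrder α] {f g : Fin n → α}
    (h : Multiset.map f Finset.univ.val = Multiset.map g Finset.univ.val) :
    f ∘ Tuple.sort f = g ∘ Tuple.sort g := by
  have hperm : (List.ofFn (f ∘ Tuple.sort f)).Perm (List.ofFn (g ∘ Tuple.sort g)) := by
    refine (Equiv.Perm.ofFn_comp_perm _ _).trans (.trans ?_ (Equiv.Perm.ofFn_comp_perm _ _).symm)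
    rw [← Multiset.coe_eq_coe, List.ofFn_eq_map, List.ofFn_eq_map]
    exact h
  exact List.ofFn_injective <| hperm.eq_of_pairwise'
    (Tuple.monotone_sort f).sortedLE_ofFn.pairwise (Tuple.monotone_sort g).sortedLE_ofFn.pairwise

lemma isOrderedSpectrum_diagonal {l : Fin 3 → ℝ} (hl : Monotone l) :
    IsOrderedSpectrum (diagonal fun i => (l i : ℂ)) l := by
  have hA : (diagonal fun i => (l i : ℂ)).IsHermitian :=
    isHermitian_diagonal_of_self_adjoint _ (by ext; simp)
  have hroots := hA.roots_charpoly_eq_eigenvalues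
  rw [charpoly_diagonal, Polynomial.roots_prod _ _
    (Finset.prod_ne_zero_iff.2 fun i _ => Polynomial.X_sub_C_ne_zero _)] at hroots
  have hmap := congr_arg (Multiset.map Complex.re) hroots
  simp only [Polynomial.roots_X_sub_C, Multiset.bind_singleton, Multiset.map_map,
    Function.comp_def, Complex.ofReal_re, Complex.coe_algebraMap] at hmap
  have hsort := comp_sort_eq_of_map_eq hmap
  rw [Tuple.sort_eq_refl_iff_monotone.2 hl] at hsort
  exact ⟨hl, hA, Tuple.sort hA.eigenvalues, congr_fun hsort⟩

lemma exists_unitary_of_isOrderedSpectrum {M : Matrix (Fin 3) (Fin 3) ℂ} {l : Fin 3 → ℝ}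
    (h : IsOrderedSpectrum M l) :
    ∃ U ∈ unitaryGroup (Fin 3) ℂ, U * M * Uᴴ = diagonal fun i => (l i : ℂ) := by
  obtain ⟨-, hM, σ, hσ⟩ := h
  have hdiag := hM.conjStarAlgAut_star_eigenvectorUnitary
  rw [Unitary.conjStarAlgAut_star_apply] at hdiag
  have hunit := mem_unitaryGroup_iff'.1 hM.eigenvectorUnitary.2
  set W : Matrix (Fin 3) (Fin 3) ℂ := (hM.eigenvectorUnitary).1
  have hconj (N : Matrix (Fin 3) (Fin 3) ℂ) :
      (star W).submatrix σ id * N * ((star W).submatrix σ id)ᴴ =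
        (star W * N * W).submatrix σ σ := by
    rw [conjTranspose_submatrix, ← star_eq_conjTranspose, star_star,
      submatrix_mul _ W _ id _ Function.bijective_id,
      submatrix_mul _ N _ id _ Function.bijective_id, submatrix_id_id]
  refine ⟨(star W).submatrix σ id, mem_unitaryGroup_iff.2 ?_, ?_⟩
  · have hone := hconj 1
    rwa [Matrix.mul_one, Matrix.mul_one, hunit, submatrix_one_equiv] at hone
  · rw [hconj, hdiag, submatrix_diagonal_equiv]
    exact congr_arg diagonal (funext fun i => congr_arg _ (hσ i).symm)

lemma forall_slack_nonneg_iff {l : Fin 3 → Fin 3 → ℝ} {a b c : Fin 3} :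
    (∀ m, 0 ≤ slack m a b c l) ↔
      (l a 1 + l a 0 ≤ l b 1 + l b 0 + l c 1 + l c 0) ∧
      (l a 2 + l a 0 ≤ l b 1 + l b 0 + l c 2 + l c 0) ∧
      (l a 1 + l a 2 ≤ l b 1 + l b 0 + l c 1 + l c 2) ∧
      (2 * l a 1 + l a 0 ≤ 2 * l b 1 + l b 0 + 2 * l c 1 + l c 0) ∧
      (2 * l a 0 + l a 1 ≤ 2 * l b 1 + l b 0 + 2 * l c 0 + l c 1) ∧
      (2 * l a 1 + l a 2 ≤ 2 * l b 1 + l b 0 + 2 * l c 1 + l c 2) ∧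
      (2 * l a 1 + l a 2 ≤ 2 * l b 0 + l b 1 + 2 * l c 2 + l c 1) := by
  simp only [Fin.forall_fin_succ, IsEmpty.forall_iff, and_true, slack_apply, Fin.sum_univ_three]
  refine and_congr ?_ <| and_congr ?_ <| and_congr ?_ <| and_congr ?_ <| and_congr ?_ <|
    and_congr ?_ ?_ <;>
  constructor <;> intro h <;> simp [slackCoeff] at h ⊢ <;> linarith

lemma HasDiagonalMarginals.slack_zero_one_two_nonneg {c : Tensor} {l : Fin 3 → Fin 3 → ℝ}
    (hc : HasDiagonalMarginals c l) (hl : ∀ a, Monotone (l a)) (m : Fin 7) :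
    0 ≤ slack m 0 1 2 l := by
  have hsum := hc.sum_eq_normSq
  simp only [Fin.sum_univ_three] at hsum
  have h0 := hsum 0
  have h1 := hsum 1
  have h2 := hsum 2
  revert m
  rw [forall_slack_nonneg_iff]
  refine ⟨?_, ?_, ?_, ?_, ?_, ?_, ?_⟩
  · linarith [hc.level_22_le_2 hl]
  · linarith [hc.level_21_le_1 hl]
  · linarith [hc.level_20_le_0 hl]
  · linarith [hc.gap_12_21_21_le hl]
  · linarith [hc.gap_02_21_20_le hl]
  · linarith [hc.gap_10_21_01_le hl]
  · linarith [hc.gap_10_20_02_le hl]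

lemma HasDiagonalMarginals.slack_nonneg {ψ : Tensor} {l : Fin 3 → Fin 3 → ℝ}
    (hψ : HasDiagonalMarginals ψ l) (hl : ∀ a, Monotone (l a)) (m : Fin 7) {a b c : Fin 3}
    (hab : a ≠ b) (hac : a ≠ c) (hbc : b ≠ c) : 0 ≤ slack m a b c l := by
  obtain ⟨σ, rfl, rfl, rfl⟩ := exists_perm_apply_eq hab hac hbc
  obtain ⟨φ, hφ⟩ : ∃ φ, HasDiagonalMarginals φ (l ∘ σ) :=
    comp_perm_of_comp_swap (P := fun l => ∃ φ, HasDiagonalMarginals φ l)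
      (fun s _ ⟨φ, hφ⟩ => ⟨_, hφ.adjSwap s⟩) ⟨ψ, hψ⟩ σ
  rw [← slack_comp_perm]
  exact hφ.slack_zero_one_two_nonneg (fun a => hl (σ a)) m

lemma exists_hasDiagonalMarginals {c : Tensor} {l : Fin 3 → Fin 3 → ℝ}
    (h : ∀ a, IsOrderedSpectrum (reduced c a) (l a)) : ∃ φ, HasDiagonalMarginals φ l := by
  choose U hU hdiag using fun a => exists_unitary_of_isOrderedSpectrum (h a)
  exact ⟨act U c, fun a => (reduced_act_of_unitary a c hU).trans (hdiag a)⟩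

lemma IsMomentWeight.exists_hasDiagonalMarginals {l : Fin 3 → Fin 3 → ℝ} (h : IsMomentWeight l)
    (hsum : ∀ a, ∑ i, l a i = 1) : ∃ φ, normSq φ = 1 ∧ HasDiagonalMarginals φ l :=
  exists_hasDiagonalMarginals_of_weightDominated psi_ne_zero hsum
    (containsGenerators_dominatedCone_psi.mem_of_isMomentWeight h)

lemma forall_isOrderedSpectrum_reduced_iff {c : Tensor} {l : Fin 3 → Fin 3 → ℝ} :
    (∀ a, IsOrderedSpectrum (reduced c a) (l a)) ↔ IsOrderedSpectrum (rho1 c) (l 0) ∧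
      IsOrderedSpectrum (rho2 c) (l 1) ∧ IsOrderedSpectrum (rho3 c) (l 2) :=
  Fin.forall_fin_succ.trans (and_congr_right' Fin.forall_fin_two)

theorem exists_isOrderedSpectrum_iff {l : Fin 3 → Fin 3 → ℝ} (hl : ∀ a, Monotone (l a))
    (hnonneg : ∀ a, 0 ≤ l a 0) (hsum : ∀ a, ∑ i, l a i = 1) :
    (∃ c, normSq c = 1 ∧ ∀ a, IsOrderedSpectrum (reduced c a) (l a)) ↔
      ∀ a b c, a ≠ b → a ≠ c → b ≠ c → ∀ m, 0 ≤ slack m a b c l := by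
  refine ⟨fun ⟨c, _, hc⟩ a b c hab hac hbc m => ?_, fun h => ?_⟩
  · obtain ⟨φ, hφ⟩ := exists_hasDiagonalMarginals hc
    exact hφ.slack_nonneg hl m hab hac hbc
  · have hmom : IsMomentWeight l :=
      { gap_nonneg := fun ⟨a, k⟩ => by
          fin_cases k
          · exact hnonneg a
          · exact sub_nonneg.2 (hl a (by decide))
          · exact sub_nonneg.2 (hl a (by decide))
        slack_nonneg := fun m a b c hab hac hbc => h a b c hab hac hbc m
        sum_eq := fun a b => (hsum a).trans (hsum b).symm }
    obtain ⟨φ, hφ, hdiag⟩ := hmom.exists_hasDiagonalMarginals hsum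
    exact ⟨φ, hφ, fun a => hdiag a ▸ isOrderedSpectrum_diagonal (hl a)⟩

end ThreeQutrit

/-- Theorem 1: nine ordered nonnegative numbers summing to one for each qutrit are the
eigenvalues of the three one-particle reduced density matrices of a pure three-qutrit
state if and only if the seven families of inequalities hold. -/
theorem three_qutrit_main (l : Fin 3 → Fin 3 → ℝ)
    (hnonneg : ∀ a i, 0 ≤ l a i)
    (hord : ∀ a, l a 0 ≤ l a 1 ∧ l a 1 ≤ l a 2)
    (hsum : ∀ a, l a 0 + l a 1 + l a 2 = 1) :
    (∃ c : Fin 3 → Fin 3 → Fin 3 → ℂ,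
        (∑ i : Fin 3, ∑ j : Fin 3, ∑ k : Fin 3, ‖c i j k‖ ^ 2) = 1 ∧
        IsOrderedSpectrum (rho1 c) (l 0) ∧
        IsOrderedSpectrum (rho2 c) (l 1) ∧
        IsOrderedSpectrum (rho3 c) (l 2)) ↔
      (∀ a b c : Fin 3, a ≠ b → a ≠ c → b ≠ c →
        (l a 1 + l a 0 ≤ l b 1 + l b 0 + l c 1 + l c 0) ∧
        (l a 2 + l a 0 ≤ l b 1 + l b 0 + l c 2 + l c 0) ∧
        (l a 1 + l a 2 ≤ l b 1 + l b 0 + l c 1 + l c 2) ∧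
        (2 * l a 1 + l a 0 ≤ 2 * l b 1 + l b 0 + 2 * l c 1 + l c 0) ∧
        (2 * l a 0 + l a 1 ≤ 2 * l b 1 + l b 0 + 2 * l c 0 + l c 1) ∧
        (2 * l a 1 + l a 2 ≤ 2 * l b 1 + l b 0 + 2 * l c 1 + l c 2) ∧
        (2 * l a 1 + l a 2 ≤ 2 * l b 0 + l b 1 + 2 * l c 2 + l c 1)) := by
  have hmono (a : Fin 3) : Monotone (l a) :=
    Fin.monotone_iff_le_succ.2 (Fin.forall_fin_two.2 (hord a))
  have hmain := ThreeQutrit.exists_isOrderedSpectrum_iff hmono (fun a => hnonneg a 0)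
    fun a => (Fin.sum_univ_three _).trans (hsum a)
  simpa only [ThreeQutrit.normSq, ThreeQutrit.forall_isOrderedSpectrum_reduced_iff,
    ThreeQutrit.forall_slack_nonneg_iff] using hmain
end

section
/- For any pure three-qutrit state, with λ_1^{(a)} ≤ λ_2^{(a)} ≤ λ_3^{(a)} the increasingly ordered eigenvalues of the a-th one-particle reduced density matrix, both inequalities λ_3^{(3)} − λ_1^{(2)} ≤ λ_2^{(1)} + λ_3^{(1)} and λ_3^{(3)} − λ_1^{(2)} ≤ λ_2^{(1)} + λ_3^{(2)} hold. -/
/-!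
Fix a unit vector `w` of the third party and let `M = (⟨w, c i j⟩)` be the contraction of the
state `c` with `w`. Splitting `c` along `w` gives `ρ⁽¹⁾ = M Mᴴ + R₁` and
`ρ⁽²⁾ = Mᵀ (Mᵀ)ᴴ + R₂`, where `R₁` and `R₂` are the reduced densities of the component of `c`
orthogonal to `w`; they are positive semidefinite with the common trace `tr ρ⁽¹⁾ - ⟨w, ρ⁽³⁾ w⟩`.
As `M Mᴴ` and `Mᵀ (Mᵀ)ᴴ` are isospectral, Weyl's inequality bounds the `i`-th eigenvalue of
`ρ⁽²⁾` by that of `ρ⁽¹⁾` plus this trace. Taking `w` to be an eigenvector of `ρ⁽³⁾` and expanding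
the trace as a sum of eigenvalues gives the marginal inequalities.
-/

open scoped BigOperators

section Weyl

open scoped InnerProductSpace

variable {𝕜 E ι : Type*} [RCLike 𝕜] [NormedAddCommGroup E] [InnerProductSpace 𝕜 E] [Fintype ι]

lemma exists_ne_zero_forall_inner_eq_zero [FiniteDimensional 𝕜 E] (w : ι → E)
    (h : Fintype.card ι < Module.finrank 𝕜 E) : ∃ x : E, x ≠ 0 ∧ ∀ i, ⟪w i, x⟫_𝕜 = 0 := by
  have hker := (LinearMap.pi fun i => innerₛₗ 𝕜 (w i)).ker_ne_bot_of_finrank_lt (by simpa using h)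
  obtain ⟨x, hx, hx0⟩ := Submodule.exists_mem_ne_zero_of_ne_bot hker
  exact ⟨x, hx0, congrFun hx⟩

lemma re_inner_apply_eq_sum (u : OrthonormalBasis ι 𝕜 E) {T : E →ₗ[𝕜] E} {a : ι → ℝ}
    (hu : ∀ m, T (u m) = (a m : 𝕜) • u m) (x : E) :
    RCLike.re ⟪x, T x⟫_𝕜 = ∑ m, a m * ‖⟪u m, x⟫_𝕜‖ ^ 2 := by
  have hT : T x = ∑ m, ⟪u m, x⟫_𝕜 • (a m : 𝕜) • u m := by
    conv_lhs => rw [← u.sum_repr' x]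
    simp only [map_sum, map_smul, hu]
  rw [hT, inner_sum, map_sum]
  refine Finset.sum_congr rfl fun m _ => ?_
  rw [inner_smul_right, inner_smul_right, mul_left_comm, RCLike.re_ofReal_mul,
    inner_mul_symm_re_eq_norm, norm_mul, norm_inner_symm x, ← sq]

theorem eigenvalue_le_eigenvalue_add [LinearOrder ι] (u v : OrthonormalBasis ι 𝕜 E)
    {S T : E →ₗ[𝕜] E} {a b : ι → ℝ} (hu : ∀ m, S (u m) = (a m : 𝕜) • u m)
    (hv : ∀ m, T (v m) = (b m : 𝕜) • v m) (ha : Monotone a) (hb : Monotone b) {r : ℝ}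
    (h : ∀ x, RCLike.re ⟪x, S x⟫_𝕜 ≤ RCLike.re ⟪x, T x⟫_𝕜 + r * ‖x‖ ^ 2) (i : ι) :
    a i ≤ b i + r := by
  have := u.toBasis.finiteDimensional_of_finite
  -- The conditions on `x` number one less than the dimension, so some `x ≠ 0` satisfies them all.
  obtain ⟨x, hx0, hx⟩ := exists_ne_zero_forall_inner_eq_zero (𝕜 := 𝕜)
    (fun m : {m // m ≠ i} => if m < i then u m else v m) (by
      rw [Module.finrank_eq_card_basis u.toBasis]
      exact Fintype.card_subtype_lt (x := i) (by simp))
  have hxu : ∀ m < i, ⟪u m, x⟫_𝕜 = 0 := fun m hm => by simpa [hm] using hx ⟨m, hm.ne⟩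
  have hxv : ∀ m, i < m → ⟪v m, x⟫_𝕜 = 0 := fun m hm => by
    simpa [hm.not_gt] using hx ⟨m, hm.ne'⟩
  have hS : a i * ‖x‖ ^ 2 ≤ RCLike.re ⟪x, S x⟫_𝕜 := by
    rw [re_inner_apply_eq_sum u hu, ← u.sum_sq_norm_inner_right, Finset.mul_sum]
    refine Finset.sum_le_sum fun m _ => ?_
    rcases lt_or_ge m i with hm | hm
    · simp [hxu m hm]
    · gcongr
      exact ha hm
  have hT : RCLike.re ⟪x, T x⟫_𝕜 ≤ b i * ‖x‖ ^ 2 := by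
    rw [re_inner_apply_eq_sum v hv, ← v.sum_sq_norm_inner_right, Finset.mul_sum]
    refine Finset.sum_le_sum fun m _ => ?_
    rcases lt_or_ge i m with hm | hm
    · simp [hxv m hm]
    · gcongr
      exact hb hm
  have hx_pos : 0 < ‖x‖ ^ 2 := by positivity
  refine le_of_mul_le_mul_right ?_ hx_pos
  linarith [h x]

end Weyl

section Spectrum

open Matrix
open scoped InnerProductSpace MatrixOrder ComplexOrder

variable {𝕜 : Type*} [RCLike 𝕜] {n : ℕ} {A B : Matrix (Fin n) (Fin n) 𝕜} {a b : Fin n → ℝ}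

lemma le_algebraMap_re_trace {ι : Type*} [Fintype ι] [DecidableEq ι] {P : Matrix ι ι 𝕜}
    (hP : P.PosSemidef) : P ≤ algebraMap ℝ _ (RCLike.re P.trace) := by
  refine le_algebraMap_of_spectrum_le (fun x hx => ?_) hP.isHermitian
  rw [hP.isHermitian.spectrum_real_eq_range_eigenvalues] at hx
  obtain ⟨i, rfl⟩ := hx
  rw [hP.isHermitian.trace_eq_sum_eigenvalues, map_sum]
  simp only [RCLike.ofReal_re]
  exact Finset.single_le_sum (fun j _ => hP.eigenvalues_nonneg j) (Finset.mem_univ i)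

/-- `a` lists the eigenvalues of the Hermitian matrix `A` with multiplicity, in increasing order.
For complex `3 × 3` matrices this unfolds to `IsOrderedSpectrum`. -/
def IsIncreasingSpectrum (A : Matrix (Fin n) (Fin n) 𝕜) (a : Fin n → ℝ) : Prop :=
  Monotone a ∧ ∃ hA : A.IsHermitian, ∃ σ : Equiv.Perm (Fin n), ∀ i, a i = hA.eigenvalues (σ i)

namespace IsIncreasingSpectrum

lemma exists_of_isHermitian (hA : A.IsHermitian) : ∃ a, IsIncreasingSpectrum A a :=
  ⟨_, Tuple.monotone_sort hA.eigenvalues, hA, _, fun _ => rfl⟩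

lemma of_charpoly_eq (h : IsIncreasingSpectrum A a) (hB : B.IsHermitian)
    (hAB : A.charpoly = B.charpoly) : IsIncreasingSpectrum B a := by
  obtain ⟨ha, hA, σ, hσ⟩ := h
  rw [(hA.eigenvalues_eq_eigenvalues_iff hB).2 hAB] at hσ
  exact ⟨ha, hB, σ, hσ⟩

lemma sum_eq_re_trace (h : IsIncreasingSpectrum A a) : ∑ i, a i = RCLike.re A.trace := by
  obtain ⟨-, hA, σ, hσ⟩ := h
  simp only [hσ, Equiv.sum_comp σ, hA.trace_eq_sum_eigenvalues, map_sum, RCLike.ofReal_re]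

lemma exists_orthonormalBasis (h : IsIncreasingSpectrum A a) :
    ∃ u : OrthonormalBasis (Fin n) 𝕜 (EuclideanSpace 𝕜 (Fin n)),
      ∀ i, toEuclideanLin A (u i) = (a i : 𝕜) • u i := by
  obtain ⟨-, hA, σ, hσ⟩ := h
  refine ⟨hA.eigenvectorBasis.reindex σ.symm, fun i => ?_⟩
  ext j
  simp [hσ, hA.mulVec_eigenvectorBasis, RCLike.real_smul_eq_coe_mul]

lemma exists_unit_eigenvector (h : IsIncreasingSpectrum A a) (i : Fin n) :
    ∃ w : Fin n → 𝕜, star w ⬝ᵥ w = 1 ∧ A *ᵥ w = (a i : 𝕜) • w := by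
  obtain ⟨u, hu⟩ := h.exists_orthonormalBasis
  refine ⟨u i, ?_, congrArg WithLp.ofLp (hu i)⟩
  rw [dotProduct_comm, ← EuclideanSpace.inner_eq_star_dotProduct, u.inner_eq_one]

theorem le_add_of_le_add (hA : IsIncreasingSpectrum A a) (hB : IsIncreasingSpectrum B b) {r : ℝ}
    (hAB : A ≤ B + algebraMap ℝ _ r) (i : Fin n) : a i ≤ b i + r := by
  obtain ⟨u, hu⟩ := hA.exists_orthonormalBasis
  obtain ⟨v, hv⟩ := hB.exists_orthonormalBasis
  refine eigenvalue_le_eigenvalue_add u v hu hv hA.1 hB.1 (fun x => ?_) i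
  have h := (isPositive_toEuclideanLin_iff.2 (Matrix.le_iff.1 hAB)).re_inner_nonneg_right x
  have hr : toEuclideanLin (algebraMap ℝ (Matrix (Fin n) (Fin n) 𝕜) r) x = (r : 𝕜) • x := by
    ext j
    simp [Matrix.algebraMap_eq_diagonal, mulVec_diagonal, Algebra.smul_def]
  rw [map_sub, map_add, LinearMap.sub_apply, LinearMap.add_apply, hr, inner_sub_right,
    inner_add_right, inner_smul_right, map_sub, map_add, RCLike.re_ofReal_mul,
    inner_self_eq_norm_sq] at h
  linarith

end IsIncreasingSpectrum

end Spectrum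

section ReducedDensity

open Matrix
open scoped MatrixOrder ComplexOrder

variable {𝕜 ι κ τ : Type*} [RCLike 𝕜] [Fintype κ] [Fintype τ]

/-- The reduced density matrix of the first party of a tripartite state. Those of the second and
the third party are obtained by permuting the arguments of `c`. -/
def reducedDensity (c : ι → κ → τ → 𝕜) : Matrix ι ι 𝕜 :=
  of fun i i' => ∑ j, c i j ⬝ᵥ star (c i' j)

/-- The partial inner product `⟨w| c` over the third party, a state of the first two parties
written as the matrix of its amplitudes. -/
def partialInner (w : τ → 𝕜) (c : ι → κ → τ → 𝕜) : Matrix ι κ 𝕜 :=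
  of fun i j => star w ⬝ᵥ c i j

/-- The state `c - (⟨w| c) ⊗ w`, which for a unit vector `w` is the component of `c` orthogonal
to `w` in the third party. -/
def orthogonalPart (w : τ → 𝕜) (c : ι → κ → τ → 𝕜) : ι → κ → τ → 𝕜 :=
  fun i j => c i j - (star w ⬝ᵥ c i j) • w

lemma dotProduct_star_eq_add {w : τ → 𝕜} (hw : star w ⬝ᵥ w = 1) (x y : τ → 𝕜) :
    x ⬝ᵥ star y = (star w ⬝ᵥ x) * star (star w ⬝ᵥ y) +
      (x - (star w ⬝ᵥ x) • w) ⬝ᵥ star (y - (star w ⬝ᵥ y) • w) := by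
  have hy : w ⬝ᵥ star y = star (star w ⬝ᵥ y) := by rw [dotProduct_comm, star_dotProduct]
  have hw' : w ⬝ᵥ star w = 1 := by rw [dotProduct_comm, hw]
  simp only [star_sub, star_smul, sub_dotProduct, dotProduct_sub, smul_dotProduct, dotProduct_smul,
    smul_eq_mul, hy, hw', dotProduct_comm x (star w)]
  ring

lemma reducedDensity_eq_add {w : τ → 𝕜} (hw : star w ⬝ᵥ w = 1) (c : ι → κ → τ → 𝕜) :
    reducedDensity c =
      partialInner w c * (partialInner w c)ᴴ + reducedDensity (orthogonalPart w c) := by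
  ext i i'
  simp only [reducedDensity, of_apply, dotProduct_star_eq_add hw (c i _), Finset.sum_add_distrib]
  rfl

lemma posSemidef_reducedDensity [Finite ι] (c : ι → κ → τ → 𝕜) :
    (reducedDensity c).PosSemidef := by
  have h : reducedDensity c = ∑ j, of (c · j) * (of (c · j))ᴴ := by
    ext i i'
    simp [reducedDensity, mul_apply, Matrix.sum_apply, dotProduct]
  rw [h]
  exact posSemidef_sum _ fun j _ => posSemidef_self_mul_conjTranspose _

variable [Fintype ι]

lemma trace_reducedDensity_swap (c : ι → κ → τ → 𝕜) :
    (reducedDensity (Function.swap c)).trace = (reducedDensity c).trace :=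
  Finset.sum_comm

omit [Fintype τ] in
lemma reducedDensity_third_swap (c : ι → κ → τ → 𝕜) :
    reducedDensity (fun k j i => Function.swap c j i k) =
      reducedDensity (fun k i j => c i j k) := by
  ext k k'
  exact Finset.sum_comm

lemma trace_partialInner_mul_conjTranspose (w : τ → 𝕜) (c : ι → κ → τ → 𝕜) :
    (partialInner w c * (partialInner w c)ᴴ).trace =
      star w ⬝ᵥ reducedDensity (fun k i j => c i j k) *ᵥ w := by
  have h : reducedDensity (fun k i j => c i j k) =
      ∑ i, ∑ j, vecMulVec (c i j) (star (c i j)) := by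
    ext k k'
    simp [reducedDensity, dotProduct, Matrix.sum_apply, vecMulVec_apply]
  simp [h, sum_mulVec, dotProduct_sum, vecMulVec_mulVec, trace, mul_apply, partialInner,
    star_dotProduct _ w, mul_comm]

lemma charpoly_partialInner_swap [DecidableEq ι] (w : τ → 𝕜) (c : ι → ι → τ → 𝕜) :
    (partialInner w (Function.swap c) * (partialInner w (Function.swap c))ᴴ).charpoly =
      (partialInner w c * (partialInner w c)ᴴ).charpoly := by
  rw [← charpoly_transpose, transpose_mul, charpoly_mul_comm]
  rfl

theorem expectation_add_spectrum_swap_le {n : ℕ} {c : Fin n → Fin n → τ → 𝕜} {a b : Fin n → ℝ}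
    (ha : IsIncreasingSpectrum (reducedDensity c) a)
    (hb : IsIncreasingSpectrum (reducedDensity (Function.swap c)) b) {w : τ → 𝕜}
    (hw : star w ⬝ᵥ w = 1) (i : Fin n) :
    RCLike.re (star w ⬝ᵥ reducedDensity (fun k i j => c i j k) *ᵥ w) + b i ≤
      a i + RCLike.re (reducedDensity c).trace := by
  obtain ⟨s, hs⟩ := IsIncreasingSpectrum.exists_of_isHermitian
    (isHermitian_mul_conjTranspose_self (partialInner w c))
  have hs_swap := hs.of_charpoly_eq (isHermitian_mul_conjTranspose_self _)
    (charpoly_partialInner_swap w c).symm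
  have hsa : s i ≤ a i + 0 := by
    refine hs.le_add_of_le_add ha ?_ i
    rw [map_zero, add_zero, reducedDensity_eq_add hw c]
    exact le_add_of_nonneg_right (posSemidef_reducedDensity _).nonneg
  have hbs : b i ≤ s i + RCLike.re (reducedDensity (orthogonalPart w (Function.swap c))).trace := by
    refine hb.le_add_of_le_add hs_swap ?_ i
    rw [reducedDensity_eq_add hw (Function.swap c)]
    gcongr
    exact le_algebraMap_re_trace (posSemidef_reducedDensity _)
  have htrace : RCLike.re (reducedDensity c).trace =
      RCLike.re (star w ⬝ᵥ reducedDensity (fun k i j => c i j k) *ᵥ w) +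
        RCLike.re (reducedDensity (orthogonalPart w (Function.swap c))).trace := by
    rw [← trace_partialInner_mul_conjTranspose, ← map_add, reducedDensity_eq_add hw c, trace_add,
      ← trace_reducedDensity_swap (orthogonalPart w c)]
    rfl
  linarith

theorem eigenvalue_third_le {m n : ℕ} {c : Fin n → Fin n → Fin m → 𝕜} {a b : Fin n → ℝ}
    {g : Fin m → ℝ} (ha : IsIncreasingSpectrum (reducedDensity c) a)
    (hb : IsIncreasingSpectrum (reducedDensity (Function.swap c)) b)
    (hg : IsIncreasingSpectrum (reducedDensity fun k i j => c i j k) g) (i : Fin n) (k : Fin m) :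
    g k ≤ a i + ∑ j ∈ {i}ᶜ, b j := by
  obtain ⟨w, hw, hgw⟩ := hg.exists_unit_eigenvector k
  have h := expectation_add_spectrum_swap_le ha hb hw i
  rw [hgw, dotProduct_smul, hw, smul_eq_mul, mul_one, RCLike.ofReal_re,
    ← trace_reducedDensity_swap, ← hb.sum_eq_re_trace, Fintype.sum_eq_add_sum_compl i] at h
  linarith

theorem three_qutrit_prop2_general {m n : ℕ} {c : Fin n → Fin n → Fin m → 𝕜} {a b : Fin n → ℝ}
    {g : Fin m → ℝ} (ha : IsIncreasingSpectrum (reducedDensity c) a)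
    (hb : IsIncreasingSpectrum (reducedDensity (Function.swap c)) b)
    (hg : IsIncreasingSpectrum (reducedDensity fun k i j => c i j k) g) (i : Fin n) (k : Fin m) :
    g k ≤ a i + ∑ j ∈ {i}ᶜ, b j ∧ g k ≤ b i + ∑ j ∈ {i}ᶜ, a j :=
  ⟨eigenvalue_third_le ha hb hg i k,
    eigenvalue_third_le hb ha ((reducedDensity_third_swap c).symm ▸ hg) i k⟩

end ReducedDensity

theorem three_qutrit_prop2 (c : Fin 3 → Fin 3 → Fin 3 → ℂ)
    (hnorm : ∑ i : Fin 3, ∑ j : Fin 3, ∑ k : Fin 3, ‖c i j k‖ ^ 2 = 1)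
    (l : Fin 3 → Fin 3 → ℝ)
    (h1 : IsOrderedSpectrum (rho1 c) (l 0))
    (h2 : IsOrderedSpectrum (rho2 c) (l 1))
    (h3 : IsOrderedSpectrum (rho3 c) (l 2)) :
    l 2 2 - l 1 0 ≤ l 0 1 + l 0 2 ∧ l 2 2 - l 1 0 ≤ l 0 1 + l 1 2 := by
  -- `rho1 c`, `rho2 c` and `rho3 c` unfold to the three reduced densities of the general theorem.
  have h := three_qutrit_prop2_general h1 h2 h3
  have sum_compl (i : Fin 3) (f : Fin 3 → ℝ) : ∑ j ∈ {i}ᶜ, f j = f 0 + f 1 + f 2 - f i := by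
    linarith [Fintype.sum_eq_add_sum_compl i f, Fin.sum_univ_three f]
  constructor
  · linarith [(h 0 2).2, sum_compl 0 (l 0)]
  · linarith [(h 1 2).1, sum_compl 1 (l 1)]
end
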